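/- arXiv:1110.3621 — 5 statements merged into one kernel-verified Lean document; each statement's English description precedes it below -/
import Mathlib

section
/- Let d ≥ 3 and 1 ≤ m ≤ d−2 be integers, let ν ≥ 0 be a real number, let z > 0, and let α = (α_1,…,α_m) ∈ ℝ^m be nonzero with Euclidean norm ‖α‖. Then the m-fold integral ∫₀^π ⋯ ∫₀^π exp( i z ( α_m sinθ_1 sinθ_2 ⋯ sinθ_{m−1} cosθ_m + α_{m−1} sinθ_1 ⋯ sinθ_{m−2} cosθ_{m−1} + ⋯ + α_2 sinθ_1 cosθ_2 + α_1 cosθ_1 ) ) · ( Γ(ν+d/2) / ( π^{m/2} Γ(ν+(d−m)/2) ) ) · ∏_{i=1}^m (sinθ_i)^{2ν+d−1−i} dθ_1 ⋯ dθ_m equals 2^{ν+d/2−1} Γ(ν+d/2) · J_{ν+d/2−1}(z‖α‖) / (z‖α‖)^{ν+d/2−1}. -/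
/-!
The exponent is `i z X`, where `X` is the inner product of `α` with the vector of the first `m`
spherical coordinates, so the integral is determined by the moments of `X` under the weight
`∏ (sin θ_i) ^ (2 l - 2 - i)`, `l = ν + d / 2` (indices starting at `0`).

Separating the first angle, `X = α_0 cos θ_0 + sin θ_0 X'` with `X'` of the same shape in one
variable fewer, and the weight factors with `l` replaced by `l - 1 / 2`. The binomial theorem and
Fubini (`sphMoment_succ`) thus express the moments of `X` through those of `X'` and the integrals
`∫ cos ^ p * sin ^ s` over `[0, π]`. The latter vanish for odd `p` and are quotients of Gamma values
for even `p` (`integral_cos_pow_even_mul_sin_rpow`, from the Beta integral, Legendre duplication and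
`cos ^ 2 = 1 - sin ^ 2`). By induction on `m` the odd moments vanish (`sphMoment_odd`), while the
`2 N`-th is an explicit multiple of `‖α‖ ^ (2 N)` (`sphMoment_even`): the Gamma factors depending on
the summation index cancel, and the binomial expansion of `(α_0 ^ 2 + ‖α'‖ ^ 2) ^ N` remains.

Integrating the exponential series term by term (`hasSum_sphMoment`) then gives the power series of
the Bessel function.
-/

open MeasureTheory Finset

/-- Bessel function of the first kind of order `μ`. -/
noncomputable def besselJ (μ : ℝ) (x : ℝ) : ℝ :=
  ∑' k : ℕ, (-1 : ℝ) ^ k / (k.factorial * Real.Gamma (k + μ + 1)) * (x / 2) ^ (2 * (k : ℝ) + μ)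

/-! ### Trigonometric integrals and Gamma values -/

open Real in
lemma gamma_nat_add_half (j : ℕ) :
    Gamma (j + 1 / 2) = (2 * j).factorial / (4 ^ j * j.factorial) * √π := by
  induction j with
  | zero => simp [-one_div, Gamma_one_half_eq]
  | succ j ih =>
    have h : ((j + 1 : ℕ) : ℝ) + 1 / 2 = (j + 1 / 2) + 1 := by push_cast; ring
    rw [h, Gamma_add_one (by positivity), ih, show 2 * (j + 1) = 2 * j + 1 + 1 by ring,
      Nat.factorial_succ, Nat.factorial_succ, Nat.factorial_succ]
    push_cast
    field_simp
    ring

/-- The symmetric Beta integral, for parameters at least `1`. -/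
lemma integral_beta_symm {σ : ℝ} (hσ : 1 ≤ σ) :
    ∫ x in (0 : ℝ)..1, (x * (1 - x)) ^ (σ - 1)
      = Real.Gamma σ * Real.Gamma σ / Real.Gamma (2 * σ) := by
  have hpos : 0 < σ := by linarith
  have h := Complex.betaIntegral_eq_Gamma_mul_div (σ : ℂ) (σ : ℂ) (by simpa) (by simpa)
  have h1 : Complex.betaIntegral (σ : ℂ) (σ : ℂ)
      = ((∫ x in (0 : ℝ)..1, (x * (1 - x)) ^ (σ - 1) : ℝ) : ℂ) := by
    rw [Complex.betaIntegral, ← intervalIntegral.integral_ofReal]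
    refine intervalIntegral.integral_congr fun x hx => ?_
    rw [Set.uIcc_of_le zero_le_one] at hx
    have hx1 : 0 ≤ 1 - x := by linarith [hx.2]
    rw [Real.mul_rpow hx.1 hx1, Complex.ofReal_mul, Complex.ofReal_cpow hx.1,
      Complex.ofReal_cpow hx1]
    push_cast
    rfl
  rw [h1, ← Complex.ofReal_add, Complex.Gamma_ofReal, Complex.Gamma_ofReal] at h
  rw [two_mul]
  exact_mod_cast h

/-- Obtained from the symmetric Beta integral by `x = (1 - cos t) / 2` and Legendre duplication. -/
lemma integral_sin_rpow {s : ℝ} (hs : 1 ≤ s) :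
    ∫ t in (0 : ℝ)..Real.pi, Real.sin t ^ s
      = √Real.pi * Real.Gamma ((s + 1) / 2) / Real.Gamma ((s + 1) / 2 + 1 / 2) := by
  have hsub := intervalIntegral.integral_comp_mul_deriv (a := 0) (b := Real.pi)
    (f := fun t => (1 - Real.cos t) / 2) (f' := fun t => Real.sin t / 2)
    (g := fun x => (x * (1 - x)) ^ ((s + 1) / 2 - 1))
    (fun t _ => by
      simpa using ((Real.hasDerivAt_cos t).const_sub 1).div_const 2)
    (by fun_prop)
    ((by fun_prop : Continuous fun x : ℝ => x * (1 - x)).rpow_const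
      fun _ => Or.inr (by linarith))
  rw [Real.cos_zero, Real.cos_pi, sub_self, zero_div,
    show (1 - -1 : ℝ) / 2 = 1 by norm_num] at hsub
  have hb := integral_beta_symm (σ := (s + 1) / 2) (by linarith)
  have hcongr : ∫ t in (0 : ℝ)..Real.pi, Real.sin t ^ s = 2 ^ s *
      ∫ t in (0 : ℝ)..Real.pi, ((fun x : ℝ => (x * (1 - x)) ^ ((s + 1) / 2 - 1)) ∘
        fun t => (1 - Real.cos t) / 2) t * (Real.sin t / 2) := by
    rw [← intervalIntegral.integral_const_mul]
    refine intervalIntegral.integral_congr fun t ht => ?_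
    rw [Set.uIcc_of_le Real.pi_pos.le] at ht
    have h0 : 0 ≤ Real.sin t := Real.sin_nonneg_of_mem_Icc ht
    simp only [Function.comp]
    have h1 : (1 - Real.cos t) / 2 * (1 - (1 - Real.cos t) / 2) = (Real.sin t / 2) ^ (2 : ℝ) := by
      rw [Real.rpow_two]
      nlinarith [Real.sin_sq_add_cos_sq t]
    have h2 : 2 * ((s + 1) / 2 - 1) + 1 = s := by ring
    rw [h1, ← Real.rpow_mul (by positivity), ← Real.rpow_add_one' (by positivity) (by linarith),
      h2, ← Real.mul_rpow (by norm_num) (by positivity), mul_div_cancel₀ _ two_ne_zero]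
  rw [hcongr]
  have hd := Real.Gamma_mul_Gamma_add_half ((s + 1) / 2)
  have hp1 : Real.Gamma ((s + 1) / 2 + 1 / 2) ≠ 0 :=
    (Real.Gamma_pos_of_pos (by linarith)).ne'
  have hp2 : Real.Gamma (2 * ((s + 1) / 2)) ≠ 0 := (Real.Gamma_pos_of_pos (by linarith)).ne'
  rw [hsub, hb]
  rw [mul_div_assoc', div_eq_div_iff hp2 hp1]
  have h2 : (2 : ℝ) ^ s * 2 ^ (1 - 2 * ((s + 1) / 2)) = 1 := by
    rw [← Real.rpow_add two_pos]; ring_nf; simp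
  calc _ = 2 ^ s * Real.Gamma ((s + 1) / 2) *
        (Real.Gamma ((s + 1) / 2) * Real.Gamma ((s + 1) / 2 + 1 / 2)) := by ring
    _ = (2 ^ s * 2 ^ (1 - 2 * ((s + 1) / 2))) * Real.Gamma ((s + 1) / 2) *
        Real.Gamma (2 * ((s + 1) / 2)) * √Real.pi := by rw [hd]; ring
    _ = _ := by rw [h2]; ring

lemma continuous_cos_pow_mul_sin_rpow (n : ℕ) {s : ℝ} (hs : 0 ≤ s) :
    Continuous fun t => Real.cos t ^ n * Real.sin t ^ s :=
  (Real.continuous_cos.pow n).mul (Real.continuous_sin.rpow_const fun _ => Or.inr hs)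

lemma integral_cos_pow_even_mul_sin_rpow (j : ℕ) : ∀ {s : ℝ}, 1 ≤ s →
    ∫ t in (0 : ℝ)..Real.pi, Real.cos t ^ (2 * j) * Real.sin t ^ s
      = Real.Gamma (j + 1 / 2) * Real.Gamma ((s + 1) / 2) /
        Real.Gamma ((s + 1) / 2 + j + 1 / 2) := by
  induction j with
  | zero =>
    intro s hs
    simp [-one_div, integral_sin_rpow hs, Real.Gamma_one_half_eq]
  | succ j ih =>
    intro s hs
    have hsplit : ∫ t in (0 : ℝ)..Real.pi, Real.cos t ^ (2 * (j + 1)) * Real.sin t ^ s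
        = (∫ t in (0 : ℝ)..Real.pi, Real.cos t ^ (2 * j) * Real.sin t ^ s)
          - ∫ t in (0 : ℝ)..Real.pi, Real.cos t ^ (2 * j) * Real.sin t ^ (s + 2) := by
      rw [← intervalIntegral.integral_sub
        ((continuous_cos_pow_mul_sin_rpow _ (by linarith)).intervalIntegrable _ _)
        ((continuous_cos_pow_mul_sin_rpow _ (by linarith)).intervalIntegrable _ _)]
      refine intervalIntegral.integral_congr fun t ht => ?_
      rw [Set.uIcc_of_le Real.pi_pos.le] at ht
      have h0 : 0 ≤ Real.sin t := Real.sin_nonneg_of_mem_Icc ht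
      rw [Real.rpow_add_of_nonneg h0 (by linarith) (by norm_num), Real.rpow_two, Real.sin_sq]
      ring
    rw [hsplit, ih hs, ih (by linarith : 1 ≤ s + 2)]
    set σ := (s + 1) / 2 with hσ
    have hσ1 : 1 ≤ σ := by rw [hσ]; linarith
    have hG : Real.Gamma (σ + j + 1 / 2) ≠ 0 := (Real.Gamma_pos_of_pos (by positivity)).ne'
    have e1 : (s + 2 + 1) / 2 = σ + 1 := by rw [hσ]; ring
    have e2 : σ + 1 + j + 1 / 2 = (σ + j + 1 / 2) + 1 := by ring
    have e3 : σ + ((j + 1 : ℕ) : ℝ) + 1 / 2 = (σ + j + 1 / 2) + 1 := by push_cast; ring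
    have e4 : ((j + 1 : ℕ) : ℝ) + 1 / 2 = (j + 1 / 2) + 1 := by push_cast; ring
    have hne : σ + j + 1 / 2 ≠ 0 := by positivity
    rw [e1, e2, e3, e4, Real.Gamma_add_one hne, Real.Gamma_add_one (by positivity : σ ≠ 0),
      Real.Gamma_add_one (by positivity : (j : ℝ) + 1 / 2 ≠ 0)]
    field_simp
    ring

/-- The reflection `t ↦ π - t` changes the sign of the integrand. -/
lemma integral_cos_pow_odd_mul_sin_rpow {n : ℕ} (hn : Odd n) (s : ℝ) :
    ∫ t in (0 : ℝ)..Real.pi, Real.cos t ^ n * Real.sin t ^ s = 0 := by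
  have h := intervalIntegral.integral_comp_sub_left (a := 0) (b := Real.pi)
    (fun t => Real.cos t ^ n * Real.sin t ^ s) Real.pi
  simp only [Real.cos_pi_sub, Real.sin_pi_sub, hn.neg_pow, neg_mul, sub_self, sub_zero,
    intervalIntegral.integral_neg] at h
  linarith

/-! ### Moments of the spherical linear form -/

/-- The Euclidean inner product of `α` with the first `m` spherical coordinates of angles `θ`. -/
noncomputable def sphForm {m : ℕ} (α : Fin m → ℝ) (θ : Fin m → ℝ) : ℝ :=
  ∑ j, α j * (∏ i ∈ Finset.Iio j, Real.sin (θ i)) * Real.cos (θ j)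

/-- The unnormalised density in the angles; in the application `2 * l = 2 * ν + d`. -/
noncomputable def sphWeight (m : ℕ) (l : ℝ) (θ : Fin m → ℝ) : ℝ :=
  ∏ i, Real.sin (θ i) ^ (2 * l - 2 - ((i : ℕ) : ℝ))

/-- Lebesgue measure on `[0, π] ^ m`, written as a product measure. -/
noncomputable def cubeMeasure (m : ℕ) : Measure (Fin m → ℝ) :=
  Measure.pi fun _ => (volume : Measure ℝ).restrict (Set.Icc 0 Real.pi)

lemma cubeMeasure_eq (m : ℕ) : cubeMeasure m =
    (volume : Measure (Fin m → ℝ)).restrict (Set.univ.pi fun _ => Set.Icc 0 Real.pi) := by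
  rw [volume_pi, Measure.restrict_pi_pi, cubeMeasure]

lemma integrable_cubeMeasure {E : Type*} [NormedAddCommGroup E] {m : ℕ} {f : (Fin m → ℝ) → E}
    (hf : Continuous f) : Integrable f (cubeMeasure m) := by
  rw [cubeMeasure_eq]
  exact hf.continuousOn.integrableOn_compact (isCompact_univ_pi fun _ => isCompact_Icc)

lemma continuous_sphForm {m : ℕ} (α : Fin m → ℝ) : Continuous (sphForm α) := by
  unfold sphForm
  fun_prop

lemma continuous_sphWeight {m : ℕ} {l : ℝ} (hl : (m : ℝ) + 2 ≤ 2 * l) :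
    Continuous (sphWeight m l) := by
  unfold sphWeight
  refine continuous_finsetProd _ fun i _ => ?_
  refine (Real.continuous_sin.comp (continuous_apply i)).rpow_const fun _ => Or.inr ?_
  have : ((i : ℕ) : ℝ) ≤ m := by exact_mod_cast i.2.le
  linarith

lemma sphForm_cons {m : ℕ} (α : Fin (m + 1) → ℝ) (t : ℝ) (θ : Fin m → ℝ) :
    sphForm α (Fin.cons t θ : Fin (m + 1) → ℝ)
      = α 0 * Real.cos t + Real.sin t * sphForm (fun i => α i.succ) θ := by
  have h0 : Finset.Iio (0 : Fin (m + 1)) = ∅ := by ext i; simp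
  have h (j : Fin m) : ∏ i ∈ Finset.Iio j.succ,
      Real.sin ((Fin.cons t θ : Fin (m + 1) → ℝ) i)
        = Real.sin t * ∏ i ∈ Finset.Iio j, Real.sin (θ i) := by
    have e : Finset.Iio j.succ = Finset.univ.filter (· < j.succ) := by ext; simp
    have e' : Finset.Iio j = Finset.univ.filter (· < j) := by ext; simp
    rw [e, e', Finset.prod_filter, Finset.prod_filter, Fin.prod_univ_succ]
    simp
  rw [sphForm, Fin.sum_univ_succ, h0, sphForm, Finset.mul_sum]
  simp only [h, Fin.cons_zero, Fin.cons_succ, Finset.prod_empty, mul_one]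
  congr 1
  refine Finset.sum_congr rfl fun j _ => ?_
  ring

lemma sphWeight_cons {m : ℕ} (l t : ℝ) (θ : Fin m → ℝ) :
    sphWeight (m + 1) l (Fin.cons t θ : Fin (m + 1) → ℝ)
      = Real.sin t ^ (2 * l - 2) * sphWeight m (l - 1 / 2) θ := by
  rw [sphWeight, Fin.prod_univ_succ, sphWeight]
  simp only [Fin.cons_zero, Fin.cons_succ, Fin.val_zero, Fin.val_succ, Nat.cast_zero, sub_zero]
  congr 1
  refine Finset.prod_congr rfl fun i _ => ?_
  congr 1
  push_cast
  ring

/-- The `n`-th moment of `sphForm α` under the weight. -/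
noncomputable def sphMoment {m : ℕ} (l : ℝ) (α : Fin m → ℝ) (n : ℕ) : ℝ :=
  ∫ θ, sphForm α θ ^ n * sphWeight m l θ ∂cubeMeasure m

/-- Fubini in the first angle, combined with the binomial theorem. -/
lemma sphMoment_succ {m : ℕ} {l : ℝ} (hl : ((m + 1 : ℕ) : ℝ) + 2 ≤ 2 * l)
    (α : Fin (m + 1) → ℝ) (n : ℕ) :
    sphMoment l α n = ∑ k ∈ Finset.range (n + 1),
      α 0 ^ (n - k) * n.choose k *
      (∫ t in (0 : ℝ)..Real.pi, Real.cos t ^ (n - k) * Real.sin t ^ (2 * l - 2 + k)) *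
      sphMoment (l - 1 / 2) (fun i => α i.succ) k := by
  push_cast at hl
  have hm : (0 : ℝ) ≤ m := m.cast_nonneg
  have hmp := (measurePreserving_piFinSuccAbove
    (fun _ : Fin (m + 1) => (volume : Measure ℝ).restrict (Set.Icc 0 Real.pi)) 0).symm
  rw [sphMoment, cubeMeasure, ← hmp.integral_comp']
  simp only [MeasurableEquiv.piFinSuccAbove_symm_apply, Fin.insertNthEquiv, Fin.insertNth_zero,
    Equiv.coe_fn_mk]
  change ∫ x : ℝ × (Fin m → ℝ), sphForm α (Fin.cons x.1 x.2 : Fin (m + 1) → ℝ) ^ n *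
    sphWeight (m + 1) l (Fin.cons x.1 x.2 : Fin (m + 1) → ℝ)
      ∂(((volume : Measure ℝ).restrict (Set.Icc 0 Real.pi)).prod (cubeMeasure m)) = _
  have : SFinite (cubeMeasure m) := by rw [cubeMeasure_eq]; infer_instance
  have hcont (k : ℕ) : Continuous fun t : ℝ =>
      α 0 ^ (n - k) * n.choose k *
        (Real.cos t ^ (n - k) * (Real.sin t ^ k * Real.sin t ^ (2 * l - 2))) := by
    have : Continuous fun t : ℝ => Real.sin t ^ (2 * l - 2) :=
      Real.continuous_sin.rpow_const fun _ => Or.inr (by linarith)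
    fun_prop
  have hexp (x : ℝ × (Fin m → ℝ)) :
      sphForm α (Fin.cons x.1 x.2 : Fin (m + 1) → ℝ) ^ n *
        sphWeight (m + 1) l (Fin.cons x.1 x.2 : Fin (m + 1) → ℝ)
      = ∑ k ∈ Finset.range (n + 1),
        (α 0 ^ (n - k) * n.choose k *
          (Real.cos x.1 ^ (n - k) * (Real.sin x.1 ^ k * Real.sin x.1 ^ (2 * l - 2)))) *
        (sphForm (fun i => α i.succ) x.2 ^ k * sphWeight m (l - 1 / 2) x.2) := by
    rw [sphForm_cons, sphWeight_cons, add_comm (α 0 * _), add_pow, Finset.sum_mul]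
    refine Finset.sum_congr rfl fun k _ => ?_
    rw [mul_pow, mul_pow]
    ring
  simp only [hexp]
  rw [integral_finsetSum]
  · refine Finset.sum_congr rfl fun k _ => ?_
    rw [integral_prod_mul (μ := (volume : Measure ℝ).restrict (Set.Icc 0 Real.pi))
      (ν := cubeMeasure m)
      (fun t => α 0 ^ (n - k) * n.choose k *
          (Real.cos t ^ (n - k) * (Real.sin t ^ k * Real.sin t ^ (2 * l - 2))))
      (fun θ => sphForm (fun i => α i.succ) θ ^ k * sphWeight m (l - 1 / 2) θ), ← sphMoment]
    congr 1
    rw [integral_const_mul, intervalIntegral.integral_of_le Real.pi_pos.le,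
      integral_Icc_eq_integral_Ioc]
    congr 1
    refine setIntegral_congr_fun measurableSet_Ioc fun t ht => ?_
    have h0 : 0 ≤ Real.sin t := Real.sin_nonneg_of_mem_Icc ⟨ht.1.le, ht.2⟩
    rw [Real.rpow_add_of_nonneg h0 (by linarith) (by positivity), Real.rpow_natCast]
    ring
  · intro k _
    have h1 : Integrable (fun t : ℝ => α 0 ^ (n - k) * n.choose k *
        (Real.cos t ^ (n - k) * (Real.sin t ^ k * Real.sin t ^ (2 * l - 2))))
        ((volume : Measure ℝ).restrict (Set.Icc 0 Real.pi)) :=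
      (hcont k).continuousOn.integrableOn_compact isCompact_Icc
    have h2 : Integrable (fun θ : Fin m → ℝ =>
        sphForm (fun i => α i.succ) θ ^ k * sphWeight m (l - 1 / 2) θ) (cubeMeasure m) :=
      integrable_cubeMeasure
        (((continuous_sphForm _).pow k).mul (continuous_sphWeight (by linarith)))
    exact h1.mul_prod h2

lemma sum_range_even {f : ℕ → ℝ} (hf : ∀ k, Odd k → f k = 0) (N : ℕ) :
    ∑ k ∈ Finset.range (2 * N + 1), f k = ∑ k ∈ Finset.range (N + 1), f (2 * k) := by
  induction N with
  | zero => simp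
  | succ N ih =>
    rw [Finset.sum_range_succ _ (N + 1), ← ih, show 2 * (N + 1) + 1 = 2 * N + 1 + 1 + 1 by ring,
      Finset.sum_range_succ, Finset.sum_range_succ, hf (2 * N + 1) ⟨N, rfl⟩, add_zero]
    rfl

lemma sphMoment_odd {m : ℕ} : ∀ {l : ℝ}, (m : ℝ) + 2 ≤ 2 * l → ∀ (α : Fin m → ℝ) {n : ℕ},
    Odd n → sphMoment l α n = 0 := by
  induction m with
  | zero =>
    intro l _ α n hn
    simp [sphMoment, sphForm, hn.pos.ne']
  | succ m ih =>
    intro l hl α n hn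
    rw [sphMoment_succ hl]
    push_cast at hl
    refine Finset.sum_eq_zero fun k hk => ?_
    rcases Nat.even_or_odd k with hk2 | hk2
    · rw [integral_cos_pow_odd_mul_sin_rpow
        (Nat.Odd.sub_even (Nat.lt_succ_iff.1 (Finset.mem_range.1 hk)) hn hk2)]
      simp
    · rw [ih (by linarith) _ hk2, mul_zero]

lemma sphMoment_even {m : ℕ} : ∀ {l : ℝ}, (m : ℝ) + 2 ≤ 2 * l → ∀ (α : Fin m → ℝ) (N : ℕ),
    sphMoment l α (2 * N) = √Real.pi ^ m * Real.Gamma (l - m / 2) * (2 * N).factorial /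
      (4 ^ N * N.factorial * Real.Gamma (l + N)) * (∑ i, α i ^ 2) ^ N := by
  induction m with
  | zero =>
    intro l hl α N
    have hl : 1 ≤ l := by simp at hl; linarith
    have hG : Real.Gamma l ≠ 0 := (Real.Gamma_pos_of_pos (by linarith)).ne'
    rcases Nat.eq_zero_or_pos N with rfl | hN
    · simp [sphMoment, sphForm, sphWeight, cubeMeasure, hG, Measure.real]
    · simp [sphMoment, sphForm, hN.ne']
  | succ m ih =>
    intro l hl α N
    have hm : (0 : ℝ) ≤ m := m.cast_nonneg
    have hl' := hl
    push_cast at hl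
    rw [sphMoment_succ hl', sum_range_even fun k hk => by
      rw [sphMoment_odd (by linarith) _ hk, mul_zero]]
    rw [Fin.sum_univ_succ, add_comm (α 0 ^ 2), add_pow, Finset.mul_sum]
    refine Finset.sum_congr rfl fun k hk => ?_
    obtain ⟨j, rfl⟩ := Nat.exists_eq_add_of_le (Nat.lt_succ_iff.1 (Finset.mem_range.1 hk))
    have hj : 2 * (k + j) - 2 * k = 2 * j := by omega
    have hk0 : (0 : ℝ) ≤ k := k.cast_nonneg
    have hj0 : (0 : ℝ) ≤ j := j.cast_nonneg
    rw [hj, integral_cos_pow_even_mul_sin_rpow j (by push_cast; linarith), ih (by linarith),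
      gamma_nat_add_half, Nat.add_sub_cancel_left]
    have e1 : (2 * l - 2 + ((2 * k : ℕ) : ℝ) + 1) / 2 = l - 1 / 2 + k := by push_cast; ring
    have e2 : l - 1 / 2 + (k : ℝ) + j + 1 / 2 = l + ((k + j : ℕ) : ℝ) := by push_cast; ring
    have e3 : l - 1 / 2 - (m : ℝ) / 2 = l - ((m + 1 : ℕ) : ℝ) / 2 := by push_cast; ring
    rw [e1, e2, e3]
    have g1 : Real.Gamma (l - 1 / 2 + k) ≠ 0 := (Real.Gamma_pos_of_pos (by linarith)).ne'
    have g2 : Real.Gamma (l + ((k + j : ℕ) : ℝ)) ≠ 0 :=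
      (Real.Gamma_pos_of_pos (by push_cast; linarith)).ne'
    have c1 : ((2 * (k + j)).choose (2 * k) : ℝ)
        = (2 * (k + j)).factorial / ((2 * k).factorial * (2 * j).factorial) := by
      rw [mul_add, Nat.cast_add_choose]
    have c2 : ((k + j).choose k : ℝ) = (k + j).factorial / (k.factorial * j.factorial) := by
      rw [Nat.cast_add_choose]
    rw [c1, c2]
    generalize Real.Gamma (l - 1 / 2 + k) = A at g1 ⊢
    generalize Real.Gamma (l + ((k + j : ℕ) : ℝ)) = B at g2 ⊢
    field_simp
    ring

/-! ### Summation of the exponential series -/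

lemma abs_sphForm_le {m : ℕ} (α θ : Fin m → ℝ) : |sphForm α θ| ≤ ∑ j, |α j| := by
  refine (Finset.abs_sum_le_sum_abs _ _).trans (Finset.sum_le_sum fun j _ => ?_)
  have h1 : |∏ i ∈ Finset.Iio j, Real.sin (θ i)| ≤ 1 := by
    rw [Finset.abs_prod]
    exact Finset.prod_le_one (fun _ _ => abs_nonneg _) fun _ _ => Real.abs_sin_le_one _
  rw [abs_mul, abs_mul, mul_assoc]
  exact mul_le_of_le_one_right (abs_nonneg _)
    (mul_le_one₀ h1 (abs_nonneg _) (Real.abs_cos_le_one _))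

/-- Term-by-term integration of the exponential series, justified by boundedness of `sphForm`. -/
lemma hasSum_sphMoment {m : ℕ} {l : ℝ} (hl : (m : ℝ) + 2 ≤ 2 * l) (α : Fin m → ℝ) (z : ℝ) :
    HasSum (fun n : ℕ => (Complex.I * z) ^ n / n.factorial * (sphMoment l α n : ℂ))
      (∫ θ, Complex.exp (Complex.I * ((z * sphForm α θ : ℝ) : ℂ)) * (sphWeight m l θ : ℂ)
        ∂cubeMeasure m) := by
  have hX := continuous_sphForm α
  have hW := continuous_sphWeight hl
  let F (n : ℕ) (θ : Fin m → ℝ) : ℂ :=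
    (Complex.I * z) ^ n / n.factorial * ((sphForm α θ ^ n * sphWeight m l θ : ℝ) : ℂ)
  have hFc (n : ℕ) : Continuous (F n) := by
    have : Continuous fun θ => sphForm α θ ^ n * sphWeight m l θ := (hX.pow n).mul hW
    exact continuous_const.mul (Complex.continuous_ofReal.comp this)
  have hbound (n : ℕ) (θ : Fin m → ℝ) :
      ‖F n θ‖ ≤ (|z| * ∑ j, |α j|) ^ n / n.factorial * |sphWeight m l θ| := by
    simp only [F, norm_mul, norm_div, norm_pow, Complex.norm_I, Complex.norm_real, one_mul,
      Complex.norm_natCast, Real.norm_eq_abs]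
    have := pow_le_pow_left₀ (abs_nonneg _) (abs_sphForm_le α θ) n
    rw [mul_pow]
    calc _ = |z| ^ n / n.factorial * |sphWeight m l θ| * |sphForm α θ| ^ n := by ring
      _ ≤ |z| ^ n / n.factorial * |sphWeight m l θ| * (∑ j, |α j|) ^ n := by gcongr
      _ = _ := by ring
  have hsum : Summable fun n => ∫ θ, ‖F n θ‖ ∂cubeMeasure m := by
    refine Summable.of_nonneg_of_le (fun n => integral_nonneg fun θ => norm_nonneg _)
      (fun n => ?_) ((Real.summable_pow_div_factorial (|z| * ∑ j, |α j|)).mul_right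
        (∫ θ, |sphWeight m l θ| ∂cubeMeasure m))
    rw [← integral_const_mul]
    exact integral_mono (integrable_cubeMeasure (hFc n).norm)
      (integrable_cubeMeasure (continuous_const.mul hW.abs)) (hbound n)
  have h := hasSum_integral_of_summable_integral_norm
    (fun n => integrable_cubeMeasure (hFc n)) hsum
  have hterm : (fun n : ℕ => (Complex.I * z) ^ n / n.factorial * (sphMoment l α n : ℂ))
      = fun n => ∫ θ, F n θ ∂cubeMeasure m := by
    funext n
    simp only [F]
    rw [integral_const_mul, integral_complex_ofReal, sphMoment]
  have hlim : ∫ θ, Complex.exp (Complex.I * ((z * sphForm α θ : ℝ) : ℂ)) *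
      (sphWeight m l θ : ℂ) ∂cubeMeasure m = ∫ θ, ∑' n, F n θ ∂cubeMeasure m := by
    refine integral_congr_ae (Filter.Eventually.of_forall fun θ => ?_)
    have he := (NormedSpace.expSeries_div_hasSum_exp
      (Complex.I * ((z * sphForm α θ : ℝ) : ℂ))).mul_right (sphWeight m l θ : ℂ)
    rw [← Complex.exp_eq_exp_ℂ] at he
    simp only
    rw [← he.tsum_eq]
    refine tsum_congr fun n => ?_
    simp only [F]
    push_cast
    ring
  rw [hterm, hlim]
  exact h

/-- The odd moments drop out and the even ones are inserted explicitly; up to the factor in front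
this is the power series of the Bessel function of order `l - 1`, divided by a power. -/
lemma hasSum_even_sphMoment {m : ℕ} {l : ℝ} (hl : (m : ℝ) + 2 ≤ 2 * l) (α : Fin m → ℝ)
    (z : ℝ) :
    HasSum (fun k : ℕ => ((√Real.pi ^ m * Real.Gamma (l - m / 2) *
        ((-1) ^ k / (k.factorial * Real.Gamma (l + k)) *
          ((z / 2) ^ 2 * ∑ i, α i ^ 2) ^ k) : ℝ) : ℂ))
      (∫ θ, Complex.exp (Complex.I * ((z * sphForm α θ : ℝ) : ℂ)) * (sphWeight m l θ : ℂ)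
        ∂cubeMeasure m) := by
  have h := hasSum_sphMoment hl α z
  have hinj : Function.Injective fun k : ℕ => 2 * k := fun a b hab => by
    simpa using hab
  rw [← hinj.hasSum_iff] at h
  · convert h using 1
    funext k
    simp only [Function.comp]
    rw [sphMoment_even hl, pow_mul (Complex.I * z), mul_pow Complex.I, Complex.I_sq]
    have hf : ((2 * k).factorial : ℂ) ≠ 0 := by exact_mod_cast (2 * k).factorial_ne_zero
    have h4 : ((z : ℂ) / 2) ^ 2 = z ^ 2 / 4 := by ring
    push_cast
    rw [h4, mul_pow, mul_pow, div_pow]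
    field_simp
  · intro n hn
    rcases Nat.even_or_odd n with ⟨k, hk⟩ | ho
    · exact absurd ⟨k, by simp only; omega⟩ hn
    · rw [sphMoment_odd hl α ho]; simp

lemma besselJ_div_rpow (μ : ℝ) {x : ℝ} (hx : 0 < x) :
    2 ^ μ * besselJ μ x / x ^ μ =
      ∑' k : ℕ, (-1 : ℝ) ^ k / (k.factorial * Real.Gamma (μ + 1 + k)) * ((x / 2) ^ 2) ^ k := by
  have hx2 : 0 < x / 2 := by positivity
  have hp : (x / 2) ^ μ ≠ 0 := (Real.rpow_pos_of_pos hx2 μ).ne'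
  have h : besselJ μ x = (∑' k : ℕ, (-1 : ℝ) ^ k / (k.factorial * Real.Gamma (μ + 1 + k)) *
      ((x / 2) ^ 2) ^ k) * (x / 2) ^ μ := by
    rw [besselJ, ← tsum_mul_right]
    refine tsum_congr fun k => ?_
    have e : 2 * (k : ℝ) = ((2 * k : ℕ) : ℝ) := by push_cast; ring
    rw [Real.rpow_add hx2, e, Real.rpow_natCast, pow_mul,
      show (k : ℝ) + μ + 1 = μ + 1 + k by ring]
    ring
  have h2 : (2 : ℝ) ^ μ ≠ 0 := (Real.rpow_pos_of_pos two_pos μ).ne'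
  have h3 : x ^ μ ≠ 0 := (Real.rpow_pos_of_pos hx μ).ne'
  rw [h, Real.div_rpow hx.le zero_le_two]
  field_simp

theorem stmt0 (d m : ℕ) (hd : 3 ≤ d) (hm1 : 1 ≤ m) (hm2 : m ≤ d - 2)
    (ν : ℝ) (hν : 0 ≤ ν) (z : ℝ) (hz : 0 < z)
    (α : EuclideanSpace ℝ (Fin m)) (hα : α ≠ 0) :
    (∫ θ in {θ : Fin m → ℝ | ∀ i, θ i ∈ Set.Icc 0 Real.pi},
      Complex.exp (Complex.I *
        ((z * ∑ j, α j * (∏ i ∈ Finset.Iio j, Real.sin (θ i)) * Real.cos (θ j) : ℝ) : ℂ)) *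
      ((Real.Gamma (ν + (d : ℝ) / 2) /
          (Real.pi ^ ((m : ℝ) / 2) * Real.Gamma (ν + ((d : ℝ) - (m : ℝ)) / 2)) *
        ∏ i, Real.sin (θ i) ^ (2 * ν + (d : ℝ) - 2 - ((i : ℕ) : ℝ)) : ℝ) : ℂ))
    = (((2 : ℝ) ^ (ν + (d : ℝ) / 2 - 1) * Real.Gamma (ν + (d : ℝ) / 2) *
        besselJ (ν + (d : ℝ) / 2 - 1) (z * ‖α‖) /
          (z * ‖α‖) ^ (ν + (d : ℝ) / 2 - 1) : ℝ) : ℂ) := by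
  have hdR : (m : ℝ) + 2 ≤ d := by
    have : m + 2 ≤ d := by omega
    exact_mod_cast this
  set l : ℝ := ν + (d : ℝ) / 2 with hl_def
  have hl : (m : ℝ) + 2 ≤ 2 * l := by rw [hl_def]; linarith
  have hm : (0 : ℝ) ≤ m := m.cast_nonneg
  have hG : Real.Gamma (l - m / 2) ≠ 0 := (Real.Gamma_pos_of_pos (by linarith)).ne'
  have hset : {θ : Fin m → ℝ | ∀ i, θ i ∈ Set.Icc 0 Real.pi}
      = Set.univ.pi fun _ => Set.Icc 0 Real.pi := by
    ext θ
    exact ⟨fun h i _ => h i, fun h i => h i trivial⟩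
  have hC : Real.pi ^ ((m : ℝ) / 2) = √Real.pi ^ m := by
    rw [Real.sqrt_eq_rpow, ← Real.rpow_natCast, ← Real.rpow_mul Real.pi_pos.le]
    ring_nf
  have harg : ν + ((d : ℝ) - m) / 2 = l - m / 2 := by rw [hl_def]; ring
  have hx : 0 < z * ‖α‖ := mul_pos hz (norm_pos_iff.2 hα)
  have hnorm : (z * ‖α‖ / 2) ^ 2 = (z / 2) ^ 2 * ∑ i, α i ^ 2 := by
    rw [mul_div_right_comm, mul_pow, EuclideanSpace.real_norm_sq_eq]
  have hweight (θ : Fin m → ℝ) : ∏ i, Real.sin (θ i) ^ (2 * ν + (d : ℝ) - 2 - ((i : ℕ) : ℝ))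
      = sphWeight m l θ := by
    rw [sphWeight, show 2 * l = 2 * ν + d by rw [hl_def]; ring]
  have hsum := (hasSum_even_sphMoment hl α z).tsum_eq
  rw [hset, ← cubeMeasure_eq, harg, hC]
  have hpull : ∀ c : ℝ, (∫ θ, Complex.exp (Complex.I * ((z * ∑ j, α j *
        (∏ i ∈ Finset.Iio j, Real.sin (θ i)) * Real.cos (θ j) : ℝ) : ℂ)) *
        ((c * ∏ i, Real.sin (θ i) ^ (2 * ν + (d : ℝ) - 2 - ((i : ℕ) : ℝ)) : ℝ) : ℂ)
        ∂cubeMeasure m)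
      = c * ∫ θ, Complex.exp (Complex.I * ((z * sphForm α θ : ℝ) : ℂ)) * (sphWeight m l θ : ℂ)
        ∂cubeMeasure m := by
    intro c
    rw [← integral_const_mul]
    refine integral_congr_ae (Filter.Eventually.of_forall fun θ => ?_)
    simp only [hweight]
    rw [← sphForm, Complex.ofReal_mul c]
    ring
  rw [hpull, ← hsum, ← Complex.ofReal_tsum, ← Complex.ofReal_mul, Complex.ofReal_inj]
  have hJ := besselJ_div_rpow (l - 1) hx
  rw [sub_add_cancel, hnorm] at hJ
  rw [tsum_mul_left, ← hJ]
  have hpi : √Real.pi ≠ 0 := (Real.sqrt_pos.2 Real.pi_pos).ne'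
  generalize Real.Gamma (l - m / 2) = A at hG ⊢
  field_simp
end

section
/- Let μ > −1/2 be a real number, let n ≥ 1 be an integer, and let a > 0, t > 0. Then the iterated integral ∫₀^t dτ_1 ∫₀^{t−τ_1} dτ_2 ⋯ ∫₀^{t−(τ_1+⋯+τ_{n−1})} dτ_n of ∏_{k=1}^{n+1} (a τ_k)^μ J_μ(a τ_k), where τ_{n+1} := t − (τ_1+⋯+τ_n), equals ( Γ(μ+1/2)^{n+1} / ( (2π)^{n/2} Γ((n+1)(μ+1/2)) ) ) · a^{−n} · (a t)^{(n+1)(μ+1/2) − 1/2} · J_{(n+1)(μ+1/2) − 1/2}(a t). -/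
/-!
The function `(a x) ^ μ J_μ(a x)` on `(0, ∞)` has Laplace transform a constant times
`(p ^ 2 + a ^ 2) ^ (-(μ + 1 / 2))`, and the simplex integral is an `(n + 1)`-fold convolution, so
the result is again a function of this type with `μ + 1 / 2` replaced by `(n + 1) (μ + 1 / 2)`.

The proof carries this out on power series, without Laplace transforms. By the duplication formula,
`(a x) ^ μ J_μ(a x)` is a multiple of `besselKernel (-a ^ 2) (μ + 1 / 2) x`, where
`besselKernel s b x = ∑ s ^ k (b)_k / k! · x ^ (2 (b + k) - 1) / Γ(2 (b + k))`
(`rpow_mul_besselJ`). Termwise integration with the Beta integral and the Chu–Vandermonde identity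
give `besselKernel s b * besselKernel s c = besselKernel s (b + c)` for the convolution
(`besselKernel_conv`). Integrating out one variable at a time then evaluates the simplex integral
(`integral_besselKernel_simplex`); Fubini is justified by comparison with a Dirichlet integral
(`integrable_besselKernel_simplex`).
-/


open MeasureTheory Finset

/-! ### Rising factorials and power densities -/

/-- The coefficient `b (b + 1) ⋯ (b + k - 1) / k!` of `z ^ k` in `(1 - z) ^ (-b)`. -/
noncomputable def risingCoeff (b : ℝ) : ℕ → ℝ
  | 0 => 1
  | k + 1 => risingCoeff b k * (b + k) / (k + 1)

/-- The density `x ^ (α - 1) / Γ(α)` on `(0, ∞)`, extended by `0`; its Laplace transform is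
`p ^ (-α)`. The extension by zero lets simplex integrals be written over the whole space. -/
noncomputable def powDensity (α x : ℝ) : ℝ :=
  if 0 < x then x ^ (α - 1) / Real.Gamma α else 0

/-- The function with Laplace transform `(p ^ 2 - s) ^ (-b)`, given by the inverse transform of the
binomial expansion in powers of `s / p ^ 2`. It vanishes for `x ≤ 0`. -/
noncomputable def besselKernel (s b x : ℝ) : ℝ :=
  ∑' k : ℕ, s ^ k * risingCoeff b k * powDensity (2 * (b + k)) x

lemma risingCoeff_nonneg {b : ℝ} (hb : 0 < b) (k : ℕ) : 0 ≤ risingCoeff b k := by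
  induction k with
  | zero => simp [risingCoeff]
  | succ k ih => rw [risingCoeff]; positivity

lemma risingCoeff_succ_mul (b : ℝ) (k : ℕ) :
    ((k + 1 : ℕ) : ℝ) * risingCoeff b (k + 1) = (b + k) * risingCoeff b k := by
  have : (k : ℝ) + 1 ≠ 0 := by positivity
  rw [risingCoeff]; push_cast; field_simp

/-- Chu–Vandermonde: both sides, as sequences in `m`, satisfy
`(m + 1) u (m + 1) = (b + c + m) u m`. -/
lemma risingCoeff_vandermonde (b c : ℝ) (m : ℕ) :
    ∑ p ∈ antidiagonal m, risingCoeff b p.1 * risingCoeff c p.2 = risingCoeff (b + c) m := by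
  induction m with
  | zero => simp [risingCoeff]
  | succ m ih =>
    have hm : ((m + 1 : ℕ) : ℝ) ≠ 0 := by positivity
    apply mul_left_cancel₀ hm
    rw [risingCoeff_succ_mul, ← ih, mul_sum, mul_sum]
    have h1 : ∑ p ∈ antidiagonal (m + 1),
        ((m + 1 : ℕ) : ℝ) * (risingCoeff b p.1 * risingCoeff c p.2) =
        ∑ p ∈ antidiagonal (m + 1), ((p.1 : ℝ) * risingCoeff b p.1) * risingCoeff c p.2 +
        ∑ p ∈ antidiagonal (m + 1), risingCoeff b p.1 * ((p.2 : ℝ) * risingCoeff c p.2) := by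
      rw [← sum_add_distrib]
      refine sum_congr rfl fun p hp => ?_
      rw [← mem_antidiagonal.1 hp]; push_cast; ring
    rw [h1, Finset.Nat.sum_antidiagonal_succ, Finset.Nat.sum_antidiagonal_succ']
    simp only [risingCoeff_succ_mul]
    simp only [Nat.cast_zero, zero_mul, mul_zero, zero_add]
    rw [← sum_add_distrib]
    refine sum_congr rfl fun p hp => ?_
    rw [← mem_antidiagonal.1 hp]; push_cast; ring

lemma powDensity_nonneg {α : ℝ} (hα : 0 < α) (x : ℝ) : 0 ≤ powDensity α x := by
  unfold powDensity
  split_ifs with h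
  · have := Real.Gamma_pos_of_pos hα
    positivity
  · exact le_rfl

lemma powDensity_of_nonpos (α : ℝ) {x : ℝ} (hx : x ≤ 0) : powDensity α x = 0 :=
  if_neg hx.not_gt

lemma measurable_powDensity (α : ℝ) : Measurable (powDensity α) := by
  unfold powDensity
  exact Measurable.ite measurableSet_Ioi (by fun_prop) measurable_const

/-- The convolution form of the Beta integral. -/
lemma integral_powDensity_conv {α β : ℝ} (hα : 0 < α) (hβ : 0 < β) (t : ℝ) :
    ∫ x, powDensity α x * powDensity β (t - x) = powDensity (α + β) t := by
  rcases le_or_gt t 0 with ht | ht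
  · rw [powDensity_of_nonpos _ ht]
    refine integral_eq_zero_of_ae (Filter.Eventually.of_forall fun x => ?_)
    rcases le_or_gt x 0 with hx | hx
    · simp [powDensity_of_nonpos _ hx]
    · simp [powDensity_of_nonpos β (show t - x ≤ 0 by linarith)]
  have hΓα := (Real.Gamma_pos_of_pos hα).ne'
  have hΓβ := (Real.Gamma_pos_of_pos hβ).ne'
  have hind : (fun x => powDensity α x * powDensity β (t - x)) =
      (Set.Ioo 0 t).indicator (fun x => (x ^ (α - 1) * (t - x) ^ (β - 1)) *
        (Real.Gamma α * Real.Gamma β)⁻¹) := by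
    funext x
    by_cases hx : x ∈ Set.Ioo 0 t
    · rw [Set.indicator_of_mem hx, powDensity, powDensity, if_pos hx.1, if_pos (by linarith [hx.2])]
      field_simp
    · rw [Set.indicator_of_notMem hx]
      simp only [Set.mem_Ioo, not_and_or, not_lt] at hx
      rcases hx with hx | hx
      · simp [powDensity_of_nonpos _ hx]
      · simp [powDensity_of_nonpos β (show t - x ≤ 0 by linarith)]
  have hbeta : ∫ x in Set.Ioo 0 t, x ^ (α - 1) * (t - x) ^ (β - 1) =
      t ^ (α + β - 1) * (Real.Gamma α * Real.Gamma β / Real.Gamma (α + β)) := by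
    have h := Complex.betaIntegral_scaled (α : ℂ) (β : ℂ) ht
    rw [Complex.betaIntegral_eq_Gamma_mul_div _ _ (by simpa) (by simpa)] at h
    rw [← Complex.ofReal_inj, ← integral_Ioc_eq_integral_Ioo,
      ← integral_complex_ofReal]
    rw [intervalIntegral.integral_of_le ht.le] at h
    push_cast [Complex.ofReal_cpow ht.le]
    simp only [← Complex.Gamma_ofReal]
    push_cast
    rw [← h]
    refine setIntegral_congr_fun measurableSet_Ioc fun x hx => ?_
    have h2 : 0 ≤ t - x := by linarith [hx.2]
    push_cast [Complex.ofReal_cpow hx.1.le, Complex.ofReal_cpow h2]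
    rfl
  rw [hind, integral_indicator measurableSet_Ioo, integral_mul_const, hbeta, powDensity, if_pos ht]
  field_simp

lemma integrable_powDensity_conv {α β : ℝ} (hα : 0 < α) (hβ : 0 < β) (t : ℝ) :
    Integrable fun x => powDensity α x * powDensity β (t - x) := by
  rcases le_or_gt t 0 with ht | ht
  · convert! integrable_zero ℝ ℝ volume using 1
    funext x
    rcases le_or_gt x 0 with hx | hx
    · simp [powDensity_of_nonpos _ hx]
    · simp [powDensity_of_nonpos β (show t - x ≤ 0 by linarith)]
  -- The Bochner integral of a non-integrable function is `0`, while this one is positive.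
  · apply Integrable.of_integral_ne_zero
    rw [integral_powDensity_conv hα hβ, powDensity, if_pos ht]
    have := Real.Gamma_pos_of_pos (add_pos hα hβ)
    positivity

/-! ### The series defining the kernel -/

/-- Termwise bound giving convergence of the kernel series: passing from `k` to `k + 1` multiplies
the left side by `x ^ 2 / (2 (k + 1) (2 (b + k) + 1))` and the right side by the larger
`x ^ 2 / (k + 1)`. -/
lemma risingCoeff_powDensity_le {b : ℝ} (hb : 0 < b) (k : ℕ) (x : ℝ) :
    risingCoeff b k * powDensity (2 * (b + k)) x ≤
      powDensity (2 * b) x * ((x ^ 2) ^ k / k.factorial) := by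
  rcases le_or_gt x 0 with hx | hx
  · simp [powDensity_of_nonpos _ hx]
  induction k with
  | zero => simp [risingCoeff]
  | succ k ih =>
    have hk : (0 : ℝ) < 2 * (b + k) := by positivity
    have hG := Real.Gamma_pos_of_pos hk
    have hΓ : Real.Gamma (2 * (b + (k + 1 : ℕ))) =
        (2 * (b + k) + 1) * ((2 * (b + k)) * Real.Gamma (2 * (b + k))) := by
      rw [← Real.Gamma_add_one hk.ne', ← Real.Gamma_add_one (by positivity)]
      congr 1; push_cast; ring
    have hpow : x ^ (2 * (b + (k + 1 : ℕ)) - 1) = x ^ (2 * (b + k) - 1) * x ^ 2 := by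
      rw [← Real.rpow_natCast, ← Real.rpow_add hx]
      congr 1; push_cast; ring
    have key : risingCoeff b (k + 1) * powDensity (2 * (b + (k + 1 : ℕ))) x =
        (risingCoeff b k * powDensity (2 * (b + k)) x) *
          (x ^ 2 / (2 * (k + 1) * (2 * (b + k) + 1))) := by
      rw [risingCoeff, powDensity, powDensity, if_pos hx, if_pos hx, hΓ, hpow]
      field_simp
    rw [key]
    calc _ ≤ (powDensity (2 * b) x * ((x ^ 2) ^ k / k.factorial)) * (x ^ 2 / (k + 1)) := by
          have hp := powDensity_nonneg (show (0 : ℝ) < 2 * b by positivity) x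
          gcongr
          nlinarith [mul_pos (show (0 : ℝ) < k + 1 by positivity) hk, Nat.cast_nonneg (α := ℝ) k]
      _ = _ := by
          rw [Nat.factorial_succ]; push_cast; rw [pow_succ (x ^ 2) k]; field_simp

lemma summable_besselKernel (s : ℝ) {b : ℝ} (hb : 0 < b) (x : ℝ) :
    Summable fun k : ℕ => |s| ^ k * risingCoeff b k * powDensity (2 * (b + k)) x := by
  refine Summable.of_nonneg_of_le (fun k => ?_) (fun k => ?_)
    ((Real.summable_pow_div_factorial (|s| * x ^ 2)).mul_left (powDensity (2 * b) x))
  · have := risingCoeff_nonneg hb k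
    have := powDensity_nonneg (show (0 : ℝ) < 2 * (b + k) by positivity) x
    positivity
  · calc _ = |s| ^ k * (risingCoeff b k * powDensity (2 * (b + k)) x) := by ring
      _ ≤ |s| ^ k * (powDensity (2 * b) x * ((x ^ 2) ^ k / k.factorial)) := by
        exact mul_le_mul_of_nonneg_left (risingCoeff_powDensity_le hb k x) (by positivity)
      _ = _ := by rw [mul_pow]; ring

lemma norm_besselKernel_term (s : ℝ) {b : ℝ} (hb : 0 < b) (x : ℝ) (k : ℕ) :
    ‖s ^ k * risingCoeff b k * powDensity (2 * (b + k)) x‖ =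
      |s| ^ k * risingCoeff b k * powDensity (2 * (b + k)) x := by
  rw [norm_mul, norm_mul, Real.norm_of_nonneg (risingCoeff_nonneg hb k),
    Real.norm_of_nonneg (powDensity_nonneg (show (0 : ℝ) < 2 * (b + k) by positivity) x),
    norm_pow, Real.norm_eq_abs]

lemma summable_norm_besselKernel (s : ℝ) {b : ℝ} (hb : 0 < b) (x : ℝ) :
    Summable fun k : ℕ => ‖s ^ k * risingCoeff b k * powDensity (2 * (b + k)) x‖ := by
  simpa only [norm_besselKernel_term s hb x] using summable_besselKernel s hb x

lemma besselKernel_of_nonpos (s b : ℝ) {x : ℝ} (hx : x ≤ 0) : besselKernel s b x = 0 := by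
  simp [besselKernel, powDensity_of_nonpos _ hx]

/-- Near `0` the kernel is no more singular than its leading term. -/
lemma abs_besselKernel_le (s : ℝ) {b : ℝ} (hb : 0 < b) (x : ℝ) :
    |besselKernel s b x| ≤ powDensity (2 * b) x * Real.exp (|s| * x ^ 2) := by
  have h := tsum_of_norm_bounded (f := fun k : ℕ =>
    s ^ k * risingCoeff b k * powDensity (2 * (b + k)) x)
    (g := fun k : ℕ => powDensity (2 * b) x * ((|s| * x ^ 2) ^ k / k.factorial))
    (a := powDensity (2 * b) x * Real.exp (|s| * x ^ 2)) ?_ ?_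
  · exact h
  · rw [Real.exp_eq_exp_ℝ]
    exact (NormedSpace.expSeries_div_hasSum_exp (|s| * x ^ 2)).mul_left _
  · intro k
    rw [norm_besselKernel_term s hb]
    calc _ = |s| ^ k * (risingCoeff b k * powDensity (2 * (b + k)) x) := by ring
      _ ≤ |s| ^ k * (powDensity (2 * b) x * ((x ^ 2) ^ k / k.factorial)) := by
        exact mul_le_mul_of_nonneg_left (risingCoeff_powDensity_le hb k x) (by positivity)
      _ = _ := by rw [mul_pow]; ring

lemma measurable_besselKernel (s : ℝ) {b : ℝ} (hb : 0 < b) : Measurable (besselKernel s b) := by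
  refine measurable_of_tendsto_metrizable (f := fun N x => ∑ k ∈ range N,
    s ^ k * risingCoeff b k * powDensity (2 * (b + k)) x) (fun N => ?_) ?_
  · exact Finset.measurable_sum _ fun k _ => (measurable_powDensity _).const_mul _
  · rw [tendsto_pi_nhds]
    exact fun x => (summable_norm_besselKernel s hb x).of_norm.hasSum.tendsto_sum_nat

/-! ### The convolution semigroup property -/

/-- Multiplying the two series, integrating termwise by the Beta integral and collecting the terms
with `p.1 + p.2 = m`, the coefficients combine by Chu–Vandermonde. -/
lemma besselKernel_conv (s : ℝ) {b c : ℝ} (hb : 0 < b) (hc : 0 < c) (t : ℝ) :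
    ∫ x, besselKernel s b x * besselKernel s c (t - x) = besselKernel s (b + c) t := by
  have hterm (r : ℝ) (p : ℕ × ℕ) :
      ∫ x, (r ^ p.1 * risingCoeff b p.1 * powDensity (2 * (b + p.1)) x) *
      (r ^ p.2 * risingCoeff c p.2 * powDensity (2 * (c + p.2)) (t - x)) =
      r ^ (p.1 + p.2) * (risingCoeff b p.1 * risingCoeff c p.2) *
        powDensity (2 * (b + c + (p.1 + p.2 : ℕ))) t := by
    rw [show 2 * (b + c + (p.1 + p.2 : ℕ)) = 2 * (b + p.1) + 2 * (c + p.2) by push_cast; ring,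
      ← integral_powDensity_conv (by positivity) (by positivity), ← integral_const_mul]
    congr 1; funext x; ring
  have hfib (r : ℝ) (m : ℕ) : ∑ p ∈ antidiagonal m,
      r ^ (p.1 + p.2) * (risingCoeff b p.1 * risingCoeff c p.2) *
        powDensity (2 * (b + c + (p.1 + p.2 : ℕ))) t =
      r ^ m * risingCoeff (b + c) m * powDensity (2 * (b + c + m)) t := by
    rw [← risingCoeff_vandermonde, mul_sum, sum_mul]
    refine sum_congr rfl fun p hp => ?_
    rw [mem_antidiagonal.1 hp]
  have hsum (r : ℝ) (hr : 0 ≤ r) : Summable fun p : ℕ × ℕ =>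
      r ^ (p.1 + p.2) * (risingCoeff b p.1 * risingCoeff c p.2) *
        powDensity (2 * (b + c + (p.1 + p.2 : ℕ))) t := by
    rw [← HasAntidiagonal.sigmaAntidiagonalEquivProd.summable_iff,
      summable_sigma_of_nonneg]
    · refine ⟨fun m => Summable.of_finite, ?_⟩
      have h := summable_besselKernel r (add_pos hb hc) t
      rw [abs_of_nonneg hr] at h
      convert! h using 2 with m
      rw [tsum_fintype, ← hfib]
      exact Finset.sum_coe_sort (antidiagonal m) fun p : ℕ × ℕ =>
        r ^ (p.1 + p.2) * (risingCoeff b p.1 * risingCoeff c p.2) *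
          powDensity (2 * (b + c + (p.1 + p.2 : ℕ))) t
    · rintro ⟨m, p, hp⟩
      have h1 := risingCoeff_nonneg hb p.1
      have h2 := risingCoeff_nonneg hc p.2
      have h3 := powDensity_nonneg (show (0 : ℝ) < 2 * (b + c + (p.1 + p.2 : ℕ)) by positivity) t
      simp only [Function.comp, HasAntidiagonal.sigmaAntidiagonalEquivProd_apply]
      positivity
  -- The norms of the terms are the terms of the same series with `|s|` in place of `s`.
  have hS := hasSum_integral_of_summable_integral_norm (μ := volume)
    (F := fun (p : ℕ × ℕ) x => (s ^ p.1 * risingCoeff b p.1 * powDensity (2 * (b + p.1)) x) *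
      (s ^ p.2 * risingCoeff c p.2 * powDensity (2 * (c + p.2)) (t - x))) ?_ ?_
  · simp only [hterm] at hS
    have hL : ∀ x, besselKernel s b x * besselKernel s c (t - x) = ∑' p : ℕ × ℕ,
        (s ^ p.1 * risingCoeff b p.1 * powDensity (2 * (b + p.1)) x) *
      (s ^ p.2 * risingCoeff c p.2 * powDensity (2 * (c + p.2)) (t - x)) := fun x =>
      tsum_mul_tsum_of_summable_norm (summable_norm_besselKernel s hb x)
        (summable_norm_besselKernel s hc (t - x))
    simp only [hL]
    rw [← hS.tsum_eq, ← HasAntidiagonal.sigmaAntidiagonalEquivProd.tsum_eq]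
    refine ((HasAntidiagonal.sigmaAntidiagonalEquivProd.summable_iff.2 hS.summable).tsum_sigma'
        (fun m => Summable.of_finite)).trans ?_
    rw [besselKernel]
    refine tsum_congr fun m => ?_
    rw [tsum_fintype, ← hfib]
    exact Finset.sum_coe_sort (antidiagonal m) fun p : ℕ × ℕ =>
      s ^ (p.1 + p.2) * (risingCoeff b p.1 * risingCoeff c p.2) *
        powDensity (2 * (b + c + (p.1 + p.2 : ℕ))) t
  · intro p
    convert! (integrable_powDensity_conv (show 0 < 2 * (b + p.1) by positivity)
      (show 0 < 2 * (c + p.2) by positivity) t).const_mul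
      (s ^ p.1 * risingCoeff b p.1 * (s ^ p.2 * risingCoeff c p.2)) using 2
    ring
  · simp only [norm_mul (_ * _ * _) (_ * _ * _), norm_besselKernel_term s hb, norm_besselKernel_term s hc, hterm]
    exact hsum _ (abs_nonneg s)

/-! ### Integration over the simplex -/

lemma measurePreserving_cons (n : ℕ) :
    MeasurePreserving (MeasurableEquiv.piFinSuccAbove (fun _ : Fin (n + 1) => ℝ) 0).symm
      ((volume : Measure ℝ).prod (volume : Measure (Fin n → ℝ))) volume :=
  (volume_preserving_piFinSuccAbove (fun _ : Fin (n + 1) => ℝ) 0).symm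

/-- Splitting off the first variable exposes a one-dimensional convolution. -/
lemma simplexIntegrand_cons (f g : ℝ → ℝ) (t : ℝ) (n : ℕ) (z : ℝ × (Fin n → ℝ)) :
    (∏ i, f ((MeasurableEquiv.piFinSuccAbove (fun _ : Fin (n + 1) => ℝ) 0).symm z i)) *
      g (t - ∑ i, (MeasurableEquiv.piFinSuccAbove (fun _ : Fin (n + 1) => ℝ) 0).symm z i) =
    (∏ i, f (z.2 i)) * (f z.1 * g (t - ∑ i, z.2 i - z.1)) := by
  rw [Fin.prod_univ_succ, Fin.sum_univ_succ]
  simp only [MeasurableEquiv.piFinSuccAbove_symm_apply, Fin.insertNthEquiv_zero,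
    Fin.consEquiv_apply, Fin.cons_zero, Fin.cons_succ]
  rw [show t - (z.1 + ∑ i, z.2 i) = t - ∑ i, z.2 i - z.1 by ring]
  ring

/-- Integrability of the Dirichlet integrand. By Tonelli, integrating out one variable raises `β`
to `α + β` and lowers `n` by one. -/
lemma integrable_powDensity_simplex {α : ℝ} (hα : 0 < α) (n : ℕ) :
    ∀ (β : ℝ), 0 < β → ∀ t : ℝ, Integrable fun τ : Fin n → ℝ =>
      (∏ i, powDensity α (τ i)) * powDensity β (t - ∑ i, τ i) := by
  induction n with
  | zero => intro β hβ t; simp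
  | succ n ih =>
    intro β hβ t
    rw [← (measurePreserving_cons n).integrable_comp_emb (MeasurableEquiv.measurableEmbedding _)]
    simp only [Function.comp_def, simplexIntegrand_cons]
    have hmα := measurable_powDensity α
    have hmβ := measurable_powDensity β
    rw [integrable_prod_iff' (by fun_prop)]
    refine ⟨Filter.Eventually.of_forall fun y =>
      (integrable_powDensity_conv hα hβ (t - ∑ i, y i)).const_mul (∏ i, powDensity α (y i)), ?_⟩
    convert! ih (α + β) (add_pos hα hβ) t using 2 with y
    rw [← integral_powDensity_conv hα hβ, ← integral_const_mul]
    congr 1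
    funext x
    refine Real.norm_of_nonneg (mul_nonneg (prod_nonneg fun i _ => powDensity_nonneg hα _)
      (mul_nonneg (powDensity_nonneg hα _) (powDensity_nonneg hβ _)))

/-- The integrand is dominated by a Dirichlet integrand: on the simplex every argument lies in
`[0, t]`, so each of the `n + 1` factors is at most `exp (|s| t ^ 2)` times a power density. -/
lemma integrable_besselKernel_simplex (s : ℝ) {b c : ℝ} (hb : 0 < b) (hc : 0 < c) (n : ℕ) (t : ℝ) :
    Integrable fun τ : Fin n → ℝ =>
      (∏ i, besselKernel s b (τ i)) * besselKernel s c (t - ∑ i, τ i) := by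
  have hmb := measurable_besselKernel s hb
  have hmc := measurable_besselKernel s hc
  refine ((integrable_powDensity_simplex (show 0 < 2 * b by positivity) n (2 * c)
    (by positivity) t).mul_const (Real.exp (|s| * t ^ 2) ^ (n + 1))).mono' (by fun_prop)
    (Filter.Eventually.of_forall fun τ => ?_)
  have hnn : 0 ≤ (∏ i, powDensity (2 * b) (τ i)) * powDensity (2 * c) (t - ∑ i, τ i) *
      Real.exp (|s| * t ^ 2) ^ (n + 1) :=
    mul_nonneg (mul_nonneg (prod_nonneg fun i _ => powDensity_nonneg (by positivity) _)
      (powDensity_nonneg (by positivity) _)) (by positivity)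
  by_cases hτ : (∀ i, 0 < τ i) ∧ ∑ i, τ i < t
  · obtain ⟨h1, h2⟩ := hτ
    have h0 : 0 ≤ ∑ i, τ i := sum_nonneg fun i _ => (h1 i).le
    have hbd (d : ℝ) (hd : 0 < d) (x : ℝ) (hx0 : 0 ≤ x) (hxt : x ≤ t) :
        |besselKernel s d x| ≤ powDensity (2 * d) x * Real.exp (|s| * t ^ 2) := by
      refine (abs_besselKernel_le s hd x).trans (mul_le_mul_of_nonneg_left ?_
        (powDensity_nonneg (by positivity) _))
      gcongr
    rw [norm_mul, norm_prod]
    calc _ ≤ (∏ i, (powDensity (2 * b) (τ i) * Real.exp (|s| * t ^ 2))) *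
          (powDensity (2 * c) (t - ∑ i, τ i) * Real.exp (|s| * t ^ 2)) := by
          refine mul_le_mul (prod_le_prod (fun i _ => norm_nonneg _) fun i _ =>
            hbd b hb _ (h1 i).le ?_) (hbd c hc _ (by linarith) (by linarith))
            (norm_nonneg _) (prod_nonneg fun i _ => mul_nonneg
              (powDensity_nonneg (by positivity) _) (by positivity))
          exact (single_le_sum (fun j _ => (h1 j).le) (mem_univ i)).trans h2.le
      _ = _ := by
          rw [prod_mul_distrib, prod_const, card_univ, Fintype.card_fin]; ring
  · rw [not_and_or] at hτ
    rcases hτ with h | h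
    · push Not at h
      obtain ⟨i, hi⟩ := h
      rw [prod_eq_zero (mem_univ i) (besselKernel_of_nonpos s b hi)]
      simpa using hnn
    · rw [besselKernel_of_nonpos s c (by linarith)]
      simpa using hnn

/-- The last parameter `c` is left free because each integration replaces it by `b + c`. -/
lemma integral_besselKernel_simplex (s : ℝ) {b : ℝ} (hb : 0 < b) (n : ℕ) :
    ∀ c : ℝ, 0 < c → ∀ t : ℝ,
      ∫ τ : Fin n → ℝ, (∏ i, besselKernel s b (τ i)) * besselKernel s c (t - ∑ i, τ i) =
        besselKernel s (n * b + c) t := by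
  induction n with
  | zero => 
    intro c hc t
    have h1 : (volume : Measure (Fin 0 → ℝ)).real Set.univ = 1 := by
      rw [Measure.real, volume_pi, Measure.pi_of_empty (fun _ : Fin 0 => (volume : Measure ℝ))]
      simp
    simp [h1]
  | succ n ih =>
    intro c hc t
    have hint := integrable_besselKernel_simplex s hb hc (n + 1) t
    rw [← (measurePreserving_cons n).integrable_comp_emb
      (MeasurableEquiv.measurableEmbedding _)] at hint
    rw [← (measurePreserving_cons n).integral_comp (MeasurableEquiv.measurableEmbedding _)]
    simp only [Function.comp_def, simplexIntegrand_cons] at hint ⊢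
    rw [integral_prod_symm _ hint]
    simp only [integral_const_mul, besselKernel_conv s hb hc]
    rw [ih _ (add_pos hb hc)]
    congr 1; push_cast; ring

/-! ### Bessel functions -/

/-- Up to a constant, `(a x) ^ μ J_μ(a x)` is the kernel with `s = -a ^ 2`, `b = μ + 1 / 2`. Termwise
this is Legendre's duplication formula at `μ + 1 / 2 + k`. -/
lemma rpow_mul_besselJ {μ a x : ℝ} (hμ : -(1 / 2 : ℝ) < μ) (ha : 0 < a) (hx : 0 < x) :
    (a * x) ^ μ * besselJ μ (a * x) =
      2 ^ μ * Real.Gamma (μ + 1 / 2) / √Real.pi * a ^ (2 * μ) *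
        besselKernel (-a ^ 2) (μ + 1 / 2) x := by
  rw [besselJ, besselKernel, ← tsum_mul_left, ← tsum_mul_left]
  refine tsum_congr fun k => ?_
  have hb : 0 < μ + 1 / 2 := by linarith
  have hk : 0 < μ + 1 / 2 + k := by positivity
  have hrise : Real.Gamma (μ + 1 / 2) * risingCoeff (μ + 1 / 2) k * k.factorial =
      Real.Gamma (μ + 1 / 2 + k) := by
    clear hk
    induction k with
    | zero => simp [risingCoeff]
    | succ k ih =>
      rw [Nat.cast_succ, ← add_assoc, Real.Gamma_add_one (by positivity), ← ih, risingCoeff,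
        Nat.factorial_succ]
      push_cast; field_simp
  have hdup := Real.Gamma_mul_Gamma_add_half (μ + 1 / 2 + k)
  rw [show μ + 1 / 2 + k + 1 / 2 = k + μ + 1 by ring, ← hrise] at hdup
  have hπ : 0 < √Real.pi := Real.sqrt_pos.2 Real.pi_pos
  have hG1 : 0 < Real.Gamma (k + μ + 1) := Real.Gamma_pos_of_pos (by linarith)
  have hG2 : 0 < Real.Gamma (2 * (μ + 1 / 2 + k)) := Real.Gamma_pos_of_pos (by positivity)
  have hG3 : 0 < Real.Gamma (μ + 1 / 2) := Real.Gamma_pos_of_pos hb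
  have hr : risingCoeff (μ + 1 / 2) k = Real.Gamma (2 * (μ + 1 / 2 + k)) *
      2 ^ (1 - 2 * (μ + 1 / 2 + k)) * √Real.pi /
      (Real.Gamma (μ + 1 / 2) * k.factorial * Real.Gamma (k + μ + 1)) := by
    rw [eq_div_iff (by positivity), ← hdup]; ring
  rw [powDensity, if_pos hx, hr, Real.div_rpow (by positivity) (by norm_num),
    Real.mul_rpow ha.le hx.le, Real.mul_rpow ha.le hx.le]
  have e1 : (2 : ℝ) ^ (1 - 2 * (μ + 1 / 2 + k)) = (2 ^ μ * 2 ^ (2 * (k : ℝ) + μ))⁻¹ := by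
    rw [← Real.rpow_add (by norm_num), ← Real.rpow_neg (by norm_num)]
    congr 1; ring
  have e2 : (-a ^ 2) ^ k * a ^ (2 * μ) = (-1) ^ k * (a ^ μ * a ^ (2 * (k : ℝ) + μ)) := by
    rw [neg_pow, ← pow_mul, mul_assoc, ← Real.rpow_natCast a, ← Real.rpow_add ha,
      ← Real.rpow_add ha]
    congr 2; push_cast; ring
  have e3 : x ^ (2 * (μ + 1 / 2 + k) - 1) = x ^ μ * x ^ (2 * (k : ℝ) + μ) := by
    rw [← Real.rpow_add hx]; congr 1; ring
  have h2 : (0 : ℝ) < 2 ^ μ := by positivity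
  have h3 : (0 : ℝ) < 2 ^ (2 * (k : ℝ) + μ) := by positivity
  rw [e1, e3]
  generalize (2 : ℝ) ^ μ = A at *
  generalize (2 : ℝ) ^ (2 * (k : ℝ) + μ) = B at *
  generalize a ^ (2 * μ) = C at *
  generalize (-a ^ 2) ^ k = D at *
  generalize Real.Gamma (2 * (μ + 1 / 2 + k)) = G2 at *
  generalize Real.Gamma (μ + 1 / 2) = G3 at *
  generalize Real.Gamma (k + μ + 1) = G1 at *
  generalize a ^ (2 * (k : ℝ) + μ) = E at *
  field_simp
  linear_combination (-1 : ℝ) * e2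

theorem stmt1 (μ : ℝ) (hμ : -(1 / 2 : ℝ) < μ) (n : ℕ) (hn : 1 ≤ n)
    (a t : ℝ) (ha : 0 < a) (ht : 0 < t) :
    (∫ τ in {τ : Fin n → ℝ | (∀ i, 0 < τ i) ∧ ∑ i, τ i < t},
      (let σ : Fin (n + 1) → ℝ := Fin.snoc τ (t - ∑ i, τ i)
       ∏ k : Fin (n + 1), (a * σ k) ^ μ * besselJ μ (a * σ k)))
    = Real.Gamma (μ + 1 / 2) ^ (n + 1) /
        ((2 * Real.pi) ^ ((n : ℝ) / 2) * Real.Gamma (((n : ℝ) + 1) * (μ + 1 / 2))) *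
      a ^ (-(n : ℝ)) * (a * t) ^ (((n : ℝ) + 1) * (μ + 1 / 2) - 1 / 2) *
      besselJ (((n : ℝ) + 1) * (μ + 1 / 2) - 1 / 2) (a * t) := by
  have hb : 0 < μ + 1 / 2 := by linarith
  have hS : MeasurableSet {τ : Fin n → ℝ | (∀ i, 0 < τ i) ∧ ∑ i, τ i < t} := by
    rw [Set.ofPred_and, Set.ofPred_forall]
    exact (MeasurableSet.iInter fun i => measurableSet_lt measurable_const
      (measurable_pi_apply i)).inter (measurableSet_lt (by fun_prop) measurable_const)
  set C := 2 ^ μ * Real.Gamma (μ + 1 / 2) / √Real.pi * a ^ (2 * μ) with hC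
  rw [setIntegral_congr_fun (g := fun τ : Fin n → ℝ => C ^ (n + 1) *
      ((∏ i, besselKernel (-a ^ 2) (μ + 1 / 2) (τ i)) *
        besselKernel (-a ^ 2) (μ + 1 / 2) (t - ∑ i, τ i))) hS ?_,
    setIntegral_eq_integral_of_forall_compl_eq_zero ?_, integral_const_mul,
    integral_besselKernel_simplex _ hb n _ hb]
  · have hB : 0 < ((n : ℝ) + 1) * (μ + 1 / 2) := by positivity
    rw [mul_assoc, rpow_mul_besselJ (by linarith) ha ht,
      show ((n : ℝ) + 1) * (μ + 1 / 2) - 1 / 2 + 1 / 2 = ((n : ℝ) + 1) * (μ + 1 / 2) by ring,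
      show (n : ℝ) * (μ + 1 / 2) + (μ + 1 / 2) = ((n : ℝ) + 1) * (μ + 1 / 2) by ring]
    have hG := Real.Gamma_pos_of_pos hB
    have hπ := Real.pi_pos
    have e1 : (2 : ℝ) ^ (((n : ℝ) + 1) * (μ + 1 / 2) - 1 / 2) =
        (2 ^ μ) ^ (n + 1) * 2 ^ ((n : ℝ) / 2) := by
      rw [← Real.rpow_mul_natCast (by norm_num), ← Real.rpow_add (by norm_num)]
      congr 1; push_cast; ring
    have e2 : a ^ (2 * (((n : ℝ) + 1) * (μ + 1 / 2) - 1 / 2)) =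
        (a ^ (2 * μ)) ^ (n + 1) * a ^ (n : ℝ) := by
      rw [← Real.rpow_mul_natCast ha.le, ← Real.rpow_add ha]
      congr 1; push_cast; ring
    have e3 : √Real.pi ^ (n + 1) = Real.pi ^ ((n : ℝ) / 2) * √Real.pi := by
      rw [pow_succ, Real.sqrt_eq_rpow, ← Real.rpow_mul_natCast hπ.le]
      congr 2; ring
    rw [hC, e1, e2, Real.mul_rpow (by norm_num) hπ.le, Real.rpow_neg ha.le, mul_pow, div_pow,
      mul_pow, e3]
    generalize Real.Gamma (((n : ℝ) + 1) * (μ + 1 / 2)) = G at *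
    field_simp
  · intro τ hτ
    simp only [Set.mem_ofPred_eq, not_and_or] at hτ
    rcases hτ with h | h
    · push Not at h
      obtain ⟨i, hi⟩ := h
      rw [prod_eq_zero (mem_univ i) (besselKernel_of_nonpos (-a ^ 2) (μ + 1 / 2) hi), zero_mul,
        mul_zero]
    · rw [besselKernel_of_nonpos (-a ^ 2) (μ + 1 / 2) (show t - ∑ i, τ i ≤ 0 by linarith), mul_zero,
        mul_zero]
  · rintro τ ⟨h1, h2⟩
    simp only [Fin.prod_univ_castSucc, Fin.snoc_castSucc, Fin.snoc_last]
    rw [rpow_mul_besselJ hμ ha (show 0 < t - ∑ i, τ i by linarith),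
      prod_congr rfl fun i _ => rpow_mul_besselJ hμ ha (h1 i), prod_mul_distrib, prod_const,
      card_univ, Fintype.card_fin]
    ring
end

section
/- Let m ≥ 1 and n ≥ 1, d ≥ 2 be integers with m < d, let ν ≥ 0 and p ≥ 1 be real, let c > 0, t > 0, and set N := (n+1)(2ν+d−1)/2. Then ∫₀^{ct} r^p · ( 2 Γ(N+1/2) / ( Γ(N − m/2 + 1/2) Γ(m/2) ) ) · r^{m−1} (c²t² − r²)^{N − (m+1)/2} / (c t)^{2N−1} dr = ( Γ(N+1/2) Γ((p+m)/2) / ( Γ(N + (p+1)/2) Γ(m/2) ) ) · (c t)^p. -/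
/-!
The substitution `y = r²` turns the moment integral into
`∫₀^{a²} y ^ (u - 1) * (a² - y) ^ (v - 1) dy` with `a = c t`, `u = (p + m) / 2` and
`v = N - m / 2 + 1 / 2`, which Euler's Beta integral evaluates as
`a ^ (2 (u + v - 1)) Γ(u) Γ(v) / Γ(u + v)`. The hypotheses `n ≥ 1` and `m < d` give `N ≥ m`,
hence `u, v ≥ 1`: the integrands are continuous up to the endpoints, so the elementary change of
variables applies.
-/

open MeasureTheory Finset

/-- Euler's Beta integral over `[0, A]`, transferred from the complex version. -/
theorem integral_rpow_mul_sub_rpow {u v A : ℝ} (hu : 0 < u) (hv : 0 < v) (hA : 0 < A) :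
    (∫ y in (0 : ℝ)..A, y ^ (u - 1) * (A - y) ^ (v - 1))
      = A ^ (u + v - 1) * (Real.Gamma u * Real.Gamma v / Real.Gamma (u + v)) := by
  have h := Complex.betaIntegral_scaled (u : ℂ) (v : ℂ) hA
  rw [Complex.betaIntegral_eq_Gamma_mul_div _ _ (by simpa using hu) (by simpa using hv)] at h
  apply Complex.ofReal_injective
  rw [← intervalIntegral.integral_ofReal]
  push_cast [Complex.ofReal_cpow hA.le, ← Complex.Gamma_ofReal]
  rw [← h]
  refine intervalIntegral.integral_congr fun y hy => ?_
  rw [Set.uIcc_of_le hA.le] at hy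
  rw [Complex.ofReal_cpow hy.1, Complex.ofReal_cpow (sub_nonneg.2 hy.2)]
  push_cast
  rfl

/-- Euler's Beta integral after the substitution `y = r ^ 2`. -/
theorem integral_sq_beta {u v a : ℝ} (hu : 1 ≤ u) (hv : 1 ≤ v) (ha : 0 < a) :
    (∫ r in (0 : ℝ)..a, ((r ^ 2) ^ (u - 1) * (a ^ 2 - r ^ 2) ^ (v - 1)) * (2 * r))
      = (a ^ 2) ^ (u + v - 1) * (Real.Gamma u * Real.Gamma v / Real.Gamma (u + v)) := by
  rw [← integral_rpow_mul_sub_rpow (by linarith) (by linarith) (by positivity)]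
  have h := intervalIntegral.integral_comp_mul_deriv (a := 0) (b := a)
    (f := fun r : ℝ => r ^ 2) (f' := fun r => 2 * r)
    (g := fun y : ℝ => y ^ (u - 1) * (a ^ 2 - y) ^ (v - 1))
    (fun x _ => by simpa using hasDerivAt_pow 2 x) (by fun_prop)
    ((Real.continuous_rpow_const (by linarith)).mul
      ((Real.continuous_rpow_const (by linarith)).comp
        (by fun_prop : Continuous fun y : ℝ => a ^ 2 - y)))
  simpa using h

theorem stmt6 (m n d : ℕ) (hm : 1 ≤ m) (hn : 1 ≤ n) (hd : 2 ≤ d) (hmd : m < d)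
    (ν p : ℝ) (hν : 0 ≤ ν) (hp : 1 ≤ p) (c t : ℝ) (hc : 0 < c) (ht : 0 < t)
    (N : ℝ) (hN : N = ((n : ℝ) + 1) * (2 * ν + (d : ℝ) - 1) / 2) :
    (∫ r in (0 : ℝ)..(c * t),
      r ^ p *
        (2 * Real.Gamma (N + 1 / 2) /
            (Real.Gamma (N - (m : ℝ) / 2 + 1 / 2) * Real.Gamma ((m : ℝ) / 2)) *
          (r ^ (m - 1) * (c ^ 2 * t ^ 2 - r ^ 2) ^ (N - ((m : ℝ) + 1) / 2) /
            (c * t) ^ (2 * N - 1))))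
    = Real.Gamma (N + 1 / 2) * Real.Gamma ((p + (m : ℝ)) / 2) /
        (Real.Gamma (N + (p + 1) / 2) * Real.Gamma ((m : ℝ) / 2)) * (c * t) ^ p := by
  have hmN : (m : ℝ) ≤ N := by
    have h1 : (m : ℝ) + 1 ≤ d := by exact_mod_cast hmd
    have h2 : (1 : ℝ) ≤ n := by exact_mod_cast hn
    rw [hN]
    nlinarith [mul_nonneg (by linarith : (0 : ℝ) ≤ n - 1)
      (by linarith [Nat.cast_nonneg (α := ℝ) m] : (0 : ℝ) ≤ 2 * ν + d - 1)]
  have hm1 : (1 : ℝ) ≤ m := by exact_mod_cast hm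
  have ha : 0 < c * t := mul_pos hc ht
  set a := c * t with ha_def
  have hct : c ^ 2 * t ^ 2 = a ^ 2 := by rw [ha_def]; ring
  rw [hct]
  have key := integral_sq_beta (u := (p + m) / 2) (v := N - m / 2 + 1 / 2)
    (by linarith) (by linarith) ha
  have hG1 : Real.Gamma (N - m / 2 + 1 / 2) ≠ 0 := (Real.Gamma_pos_of_pos (by linarith)).ne'
  have hG2 : Real.Gamma ((m : ℝ) / 2) ≠ 0 := (Real.Gamma_pos_of_pos (by linarith)).ne'
  have hG3 : Real.Gamma (N + (p + 1) / 2) ≠ 0 := (Real.Gamma_pos_of_pos (by linarith)).ne'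
  have hint : ∀ r ∈ Set.uIcc 0 a,
      r ^ p * (2 * Real.Gamma (N + 1 / 2) /
          (Real.Gamma (N - (m : ℝ) / 2 + 1 / 2) * Real.Gamma ((m : ℝ) / 2)) *
        (r ^ (m - 1) * (a ^ 2 - r ^ 2) ^ (N - ((m : ℝ) + 1) / 2) / a ^ (2 * N - 1)))
      = Real.Gamma (N + 1 / 2) /
          (Real.Gamma (N - (m : ℝ) / 2 + 1 / 2) * Real.Gamma ((m : ℝ) / 2)) / a ^ (2 * N - 1) *
        (((r ^ 2) ^ ((p + m) / 2 - 1) * (a ^ 2 - r ^ 2) ^ (N - m / 2 + 1 / 2 - 1)) * (2 * r)) := by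
    intro r hr
    rw [Set.uIcc_of_le ha.le] at hr
    have hpow : r ^ p * r ^ (m - 1) = (r ^ 2) ^ ((p + m) / 2 - 1) * r := by
      rcases hr.1.eq_or_lt with h0 | h0
      · rw [← h0, Real.zero_rpow (by linarith)]
        simp
      · rw [← Real.rpow_natCast r (m - 1), ← Real.rpow_natCast r 2, ← Real.rpow_mul h0.le,
          ← Real.rpow_add h0, ← Real.rpow_add_one h0.ne']
        congr 1
        push_cast [Nat.cast_sub hm]
        ring
    have he : N - ((m : ℝ) + 1) / 2 = N - m / 2 + 1 / 2 - 1 := by ring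
    rw [he]
    linear_combination (2 * Real.Gamma (N + 1 / 2) /
      (Real.Gamma (N - (m : ℝ) / 2 + 1 / 2) * Real.Gamma ((m : ℝ) / 2)) *
      (a ^ 2 - r ^ 2) ^ (N - (m : ℝ) / 2 + 1 / 2 - 1) / a ^ (2 * N - 1)) * hpow
  rw [intervalIntegral.integral_congr hint, intervalIntegral.integral_const_mul, key]
  have hsum : (p + m) / 2 + (N - m / 2 + 1 / 2) = N + (p + 1) / 2 := by ring
  have hpa : (a ^ 2) ^ (N + (p + 1) / 2 - 1) = a ^ p * a ^ (2 * N - 1) := by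
    rw [← Real.rpow_natCast a 2, ← Real.rpow_mul ha.le, ← Real.rpow_add ha]
    congr 1
    push_cast
    ring
  have hane : a ^ (2 * N - 1) ≠ 0 := (Real.rpow_pos_of_pos ha _).ne'
  rw [hsum, hpa]
  -- `field_simp` would rewrite inside the arguments of `Γ`, out of reach of the nonvanishing facts.
  generalize Real.Gamma (N - m / 2 + 1 / 2) = G1 at *
  generalize Real.Gamma (N + (p + 1) / 2) = G3 at *
  generalize Real.Gamma ((m : ℝ) / 2) = G2 at *
  generalize a ^ (2 * N - 1) = b at *
  field_simp
end

section
/- Let z > 0 and let α, β ∈ ℝ be not both zero, and set R := √(α²+β²). Then ∫₀^{2π} e^{i z (α cosθ + β sinθ)} sin²θ dθ = 2π · ( J_1(zR)/(zR) − (β²/R²) · J_2(zR) ). -/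
/-!
Write `(α, β) = R (cos φ, sin φ)` and `x = z R`. By periodicity, translating by `φ` turns the
integral into `∫ exp(i x cos t) sin²(t + φ) dt`, and
`sin²(t + φ) = sin² t + sin² φ · (2 cos² t - 1) + 2 sin φ cos φ · sin t cos t`.
The last summand is odd under `t ↦ 2π - t` and integrates to zero. The weights `sin² t` and
`2 cos² t - 1` give `2π J₁(x) / x` (`integral_exp_sin_sq`) and `-2π J₂(x)`
(`integral_exp_cos_two`), and `sin² φ = β² / R²`. To evaluate these two integrals, expand the
exponential, integrate term by term (`hasSum_integral_exp_cos`), and insert the moments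
`∫ cos^(2k) = 2π (2k)! / (4^k k!²)`, the odd moments being zero.
-/

open MeasureTheory Finset

lemma cosMoment_succ_succ (n : ℕ) :
    ∫ t in (0 : ℝ)..(2 * Real.pi), Real.cos t ^ (n + 2)
      = (n + 1) / (n + 2) * ∫ t in (0 : ℝ)..(2 * Real.pi), Real.cos t ^ n := by
  rw [integral_cos_pow]
  simp

lemma cosMoment_odd (k : ℕ) : ∫ t in (0 : ℝ)..(2 * Real.pi), Real.cos t ^ (2 * k + 1) = 0 := by
  induction k with
  | zero => simp
  | succ k ih =>
    rw [show 2 * (k + 1) + 1 = (2 * k + 1) + 2 by ring, cosMoment_succ_succ, ih, mul_zero]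

lemma cosMoment_even (k : ℕ) : ∫ t in (0 : ℝ)..(2 * Real.pi), Real.cos t ^ (2 * k)
    = 2 * Real.pi * (2 * k).factorial / (4 ^ k * (k.factorial : ℝ) ^ 2) := by
  induction k with
  | zero => simp
  | succ k ih =>
    rw [show 2 * (k + 1) = 2 * k + 2 by ring, cosMoment_succ_succ, ih]
    have : (k.factorial : ℝ) ≠ 0 := by positivity
    simp only [Nat.factorial_succ]
    push_cast
    field_simp
    ring

/-- Termwise integration of the exponential series of `exp (i x cos t)` against a continuous
weight. -/
lemma hasSum_integral_exp_cos (x : ℝ) (g : ℝ → ℝ) (hg : Continuous g) :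
    HasSum (fun n : ℕ => (Complex.I * x) ^ n / (n.factorial : ℂ) *
        ((∫ t in (0 : ℝ)..(2 * Real.pi), Real.cos t ^ n * g t : ℝ) : ℂ))
      (∫ t in (0 : ℝ)..(2 * Real.pi),
        Complex.exp (Complex.I * ((x * Real.cos t : ℝ) : ℂ)) * (g t : ℂ)) := by
  have key := intervalIntegral.hasSum_integral_of_dominated_convergence
    (μ := volume) (a := 0) (b := 2 * Real.pi)
    (F := fun (n : ℕ) (t : ℝ) => (Complex.I * x) ^ n / (n.factorial : ℂ) *
      ((Real.cos t ^ n * g t : ℝ) : ℂ))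
    (f := fun t => Complex.exp (Complex.I * ((x * Real.cos t : ℝ) : ℂ)) * (g t : ℂ))
    (fun n t => |x| ^ n / n.factorial * |g t|) ?_ ?_ ?_ ?_ ?_
  · simpa only [intervalIntegral.integral_const_mul, intervalIntegral.integral_ofReal] using key
  · intro n
    exact Continuous.aestronglyMeasurable (by fun_prop)
  · intro n
    refine Filter.Eventually.of_forall fun t _ => ?_
    rw [norm_mul, norm_div, norm_pow, norm_mul, Complex.norm_I, one_mul, Complex.norm_real,
      Complex.norm_real, Complex.norm_natCast, Real.norm_eq_abs, Real.norm_eq_abs, abs_mul, abs_pow]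
    gcongr
    exact mul_le_of_le_one_left (abs_nonneg _)
      (pow_le_one₀ (abs_nonneg _) (Real.abs_cos_le_one t))
  · exact Filter.Eventually.of_forall fun t _ => (Real.summable_pow_div_factorial |x|).mul_right _
  · simp_rw [tsum_mul_right]
    exact Continuous.intervalIntegrable (by fun_prop) _ _
  · refine Filter.Eventually.of_forall fun t _ => ?_
    have h := (NormedSpace.expSeries_div_hasSum_exp
      (Complex.I * ((x * Real.cos t : ℝ) : ℂ))).mul_right (g t : ℂ)
    rw [← Complex.exp_eq_exp_ℂ] at h
    refine h.congr_fun fun n => ?_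
    push_cast
    ring

/-- The even part of the previous series, for a weight whose odd moments against powers of the
cosine vanish. -/
lemma hasSum_integral_exp_cos_even (x : ℝ) (g : ℝ → ℝ) (hg : Continuous g)
    (hodd : ∀ k : ℕ, ∫ t in (0 : ℝ)..(2 * Real.pi), Real.cos t ^ (2 * k + 1) * g t = 0) :
    HasSum (fun k : ℕ => (((-1) ^ k * x ^ (2 * k) / ((2 * k).factorial : ℝ) *
        (∫ t in (0 : ℝ)..(2 * Real.pi), Real.cos t ^ (2 * k) * g t) : ℝ) : ℂ))
      (∫ t in (0 : ℝ)..(2 * Real.pi),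
        Complex.exp (Complex.I * ((x * Real.cos t : ℝ) : ℂ)) * (g t : ℂ)) := by
  have h := hasSum_integral_exp_cos x g hg
  have hinj : Function.Injective (fun k : ℕ => 2 * k) := fun a b hab => by
    simpa using hab
  rw [← hinj.hasSum_iff] at h
  · convert h using 2 with k
    simp only [Function.comp_apply, mul_pow, pow_mul, Complex.I_sq]
    push_cast
    ring
  · intro n hn
    obtain ⟨k, rfl | rfl⟩ := n.even_or_odd'
    · exact absurd ⟨k, rfl⟩ hn
    · simp only [hodd, Complex.ofReal_zero, mul_zero]

lemma cosMoment_mul_sin_sq (n : ℕ) :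
    ∫ t in (0 : ℝ)..(2 * Real.pi), Real.cos t ^ n * Real.sin t ^ 2
      = (∫ t in (0 : ℝ)..(2 * Real.pi), Real.cos t ^ n) / (n + 2) := by
  have : ∀ t, Real.cos t ^ n * Real.sin t ^ 2 = Real.cos t ^ n - Real.cos t ^ (n + 2) := by
    intro t
    rw [Real.sin_sq]
    ring
  simp_rw [this]
  rw [intervalIntegral.integral_sub (Continuous.intervalIntegrable (by fun_prop) _ _)
    (Continuous.intervalIntegrable (by fun_prop) _ _), cosMoment_succ_succ]
  field_simp
  ring

lemma cosMoment_mul_cos_two (n : ℕ) :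
    ∫ t in (0 : ℝ)..(2 * Real.pi), Real.cos t ^ n * (2 * Real.cos t ^ 2 - 1)
      = n / (n + 2) * (∫ t in (0 : ℝ)..(2 * Real.pi), Real.cos t ^ n) := by
  have : ∀ t, Real.cos t ^ n * (2 * Real.cos t ^ 2 - 1)
      = 2 * Real.cos t ^ (n + 2) - Real.cos t ^ n := by
    intro t
    ring
  simp_rw [this]
  rw [intervalIntegral.integral_sub (Continuous.intervalIntegrable (by fun_prop) _ _)
    (Continuous.intervalIntegrable (by fun_prop) _ _), intervalIntegral.integral_const_mul,
    cosMoment_succ_succ]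
  field_simp
  ring

lemma integral_exp_sin_sq (x : ℝ) (hx : 0 < x) :
    ∫ t in (0 : ℝ)..(2 * Real.pi),
        Complex.exp (Complex.I * ((x * Real.cos t : ℝ) : ℂ)) * ((Real.sin t ^ 2 : ℝ) : ℂ)
      = ((2 * Real.pi * (besselJ 1 x / x) : ℝ) : ℂ) := by
  have h := hasSum_integral_exp_cos_even x (fun t => Real.sin t ^ 2) (by fun_prop)
    (fun k => by rw [cosMoment_mul_sin_sq, cosMoment_odd, zero_div])
  rw [← h.tsum_eq, ← Complex.ofReal_tsum, besselJ, ← tsum_div_const, ← tsum_mul_left]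
  congr 1
  refine tsum_congr fun k => ?_
  rw [cosMoment_mul_sin_sq, cosMoment_even]
  have e1 : Real.Gamma ((k : ℝ) + 1 + 1) = ((k + 1).factorial : ℝ) := by
    rw [← Real.Gamma_nat_eq_factorial]; push_cast; rfl
  have e2 : (x / 2) ^ (2 * (k : ℝ) + 1) = (x / 2) ^ (2 * k + 1) := by
    rw [← Real.rpow_natCast]; push_cast; rfl
  have h4 : (4 : ℝ) ^ k = 2 ^ (2 * k) := by rw [pow_mul]; norm_num
  have hk : (k.factorial : ℝ) ≠ 0 := by positivity
  rw [e1, e2, h4, Nat.factorial_succ, pow_succ, div_pow]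
  push_cast
  field_simp
  ring

lemma integral_exp_cos_two (x : ℝ) (hx : 0 < x) :
    ∫ t in (0 : ℝ)..(2 * Real.pi),
        Complex.exp (Complex.I * ((x * Real.cos t : ℝ) : ℂ)) * ((2 * Real.cos t ^ 2 - 1 : ℝ) : ℂ)
      = ((-(2 * Real.pi * besselJ 2 x) : ℝ) : ℂ) := by
  have h := hasSum_integral_exp_cos_even x (fun t => 2 * Real.cos t ^ 2 - 1) (by fun_prop)
    (fun k => by rw [cosMoment_mul_cos_two, cosMoment_odd, mul_zero])
  -- The constant term vanishes, and the remaining ones match the series of `J₂` shifted by one.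
  rw [← hasSum_nat_add_iff' 1] at h
  simp only [Finset.sum_range_one, cosMoment_mul_cos_two, mul_zero, Nat.cast_zero, zero_div,
    zero_mul, Complex.ofReal_zero, sub_zero] at h
  rw [← h.tsum_eq, ← Complex.ofReal_tsum, besselJ, ← tsum_mul_left, ← tsum_neg]
  congr 1
  refine tsum_congr fun k => ?_
  rw [cosMoment_even]
  have e1 : Real.Gamma ((k : ℝ) + 2 + 1) = ((k + 2).factorial : ℝ) := by
    rw [← Real.Gamma_nat_eq_factorial]; push_cast; rfl
  have e2 : (x / 2) ^ (2 * (k : ℝ) + 2) = (x / 2) ^ (2 * (k + 1)) := by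
    rw [← Real.rpow_natCast]; push_cast; congr 1; ring
  have h4 : (4 : ℝ) ^ (k + 1) = 2 ^ (2 * (k + 1)) := by rw [pow_mul]; norm_num
  have hk : (k.factorial : ℝ) ≠ 0 := by positivity
  have hk2 : ((2 * (k + 1)).factorial : ℝ) ≠ 0 := by positivity
  rw [e1, e2, h4, Nat.factorial_succ (k + 1), Nat.factorial_succ k, pow_succ (-1 : ℝ), div_pow]
  push_cast
  field_simp

lemma integral_exp_sin_mul_cos (x : ℝ) :
    ∫ t in (0 : ℝ)..(2 * Real.pi),
        Complex.exp (Complex.I * ((x * Real.cos t : ℝ) : ℂ)) *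
          ((Real.sin t * Real.cos t : ℝ) : ℂ) = 0 := by
  have h := intervalIntegral.integral_comp_sub_left (a := 0) (b := 2 * Real.pi)
    (fun t : ℝ => Complex.exp (Complex.I * ((x * Real.cos t : ℝ) : ℂ)) *
          ((Real.sin t * Real.cos t : ℝ) : ℂ)) (2 * Real.pi)
  simp only [Real.cos_two_pi_sub, Real.sin_two_pi_sub, sub_self, sub_zero, neg_mul,
    Complex.ofReal_neg, mul_neg, intervalIntegral.integral_neg] at h
  exact self_eq_neg.mp h.symm

theorem stmt7 (z α β : ℝ) (hz : 0 < z) (hαβ : ¬(α = 0 ∧ β = 0))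
    (R : ℝ) (hR : R = Real.sqrt (α ^ 2 + β ^ 2)) :
    (∫ θ in (0 : ℝ)..(2 * Real.pi),
      Complex.exp (Complex.I * ((z * (α * Real.cos θ + β * Real.sin θ) : ℝ) : ℂ)) *
        ((Real.sin θ ^ 2 : ℝ) : ℂ))
    = ((2 * Real.pi * (besselJ 1 (z * R) / (z * R) - β ^ 2 / R ^ 2 * besselJ 2 (z * R)) : ℝ) : ℂ) := by
  have hpos : 0 < α ^ 2 + β ^ 2 := by
    rcases not_and_or.mp hαβ with h | h <;> positivity
  have hR0 : 0 < R := hR ▸ Real.sqrt_pos.mpr hpos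
  obtain ⟨φ, hα, hβ⟩ : ∃ φ : ℝ, α = R * Real.cos φ ∧ β = R * Real.sin φ := by
    have hn : ‖(⟨α, β⟩ : ℂ)‖ = R := by
      rw [hR, Complex.norm_def, Complex.normSq_mk, sq, sq]
    refine ⟨Complex.arg ⟨α, β⟩, ?_, ?_⟩
    · rw [← hn, Complex.norm_mul_cos_arg]
    · rw [← hn, Complex.norm_mul_sin_arg]
  set F : ℝ → ℂ := fun θ =>
    Complex.exp (Complex.I * ((z * (α * Real.cos θ + β * Real.sin θ) : ℝ) : ℂ)) *
        ((Real.sin θ ^ 2 : ℝ) : ℂ) with hF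
  have hper : Function.Periodic F (2 * Real.pi) := fun θ => by
    simp only [hF, Real.cos_add_two_pi, Real.sin_add_two_pi]
  have hshift : ∫ θ in (0 : ℝ)..(2 * Real.pi), F θ
      = ∫ t in (0 : ℝ)..(2 * Real.pi), F (t + φ) := by
    have := hper.intervalIntegral_add_eq 0 φ
    rw [intervalIntegral.integral_comp_add_right, zero_add, add_comm (2 * Real.pi), ← this,
      zero_add]
  have hpt : ∀ t, F (t + φ) =
      Complex.exp (Complex.I * ((z * R * Real.cos t : ℝ) : ℂ)) * ((Real.sin t ^ 2 : ℝ) : ℂ)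
      + ((Real.sin φ ^ 2 : ℝ) : ℂ) * (Complex.exp (Complex.I * ((z * R * Real.cos t : ℝ) : ℂ)) *
          ((2 * Real.cos t ^ 2 - 1 : ℝ) : ℂ))
      + ((2 * Real.sin φ * Real.cos φ : ℝ) : ℂ) *
        (Complex.exp (Complex.I * ((z * R * Real.cos t : ℝ) : ℂ)) *
          ((Real.sin t * Real.cos t : ℝ) : ℂ)) := by
    intro t
    have h1 : z * (α * Real.cos (t + φ) + β * Real.sin (t + φ)) = z * R * Real.cos t := by
      rw [hα, hβ, Real.cos_add, Real.sin_add]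
      linear_combination z * R * Real.cos t * Real.sin_sq_add_cos_sq φ
    have h2 : Real.sin (t + φ) ^ 2 = Real.sin t ^ 2 + Real.sin φ ^ 2 * (2 * Real.cos t ^ 2 - 1)
        + 2 * Real.sin φ * Real.cos φ * (Real.sin t * Real.cos t) := by
      rw [Real.sin_add]
      linear_combination Real.sin t ^ 2 * Real.sin_sq_add_cos_sq φ
        - Real.sin φ ^ 2 * Real.sin_sq_add_cos_sq t
    simp only [hF]
    rw [h1, h2]
    push_cast
    ring
  have hβR : β ^ 2 / R ^ 2 = Real.sin φ ^ 2 := by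
    rw [hβ]
    field_simp
  rw [hshift]
  simp_rw [hpt]
  rw [intervalIntegral.integral_add (Continuous.intervalIntegrable (by fun_prop) _ _)
      (Continuous.intervalIntegrable (by fun_prop) _ _),
    intervalIntegral.integral_add (Continuous.intervalIntegrable (by fun_prop) _ _)
      (Continuous.intervalIntegrable (by fun_prop) _ _),
    intervalIntegral.integral_const_mul, intervalIntegral.integral_const_mul,
    integral_exp_sin_sq _ (mul_pos hz hR0), integral_exp_cos_two _ (mul_pos hz hR0),
    integral_exp_sin_mul_cos, hβR]
  push_cast
  ring
end

section
/- Let z > 0 and let α, β ∈ ℝ be not both zero, and set R := √(α²+β²). Then ∫₀^{2π} e^{i z (α cosθ + β sinθ)} sin⁶θ dθ = 2π · ( 15 J_3(zR)/(zR)³ − 45 β² J_4(zR)/(z² R⁴) + 15 β⁴ J_5(zR)/(z R⁵) − β⁶ J_6(zR)/R⁶ ). -/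
/-!
Write `α = R cos φ`, `β = R sin φ`. By periodicity, shifting `θ = t + φ` turns the integral into
`∫ exp (i x cos t) sin⁶ (t + φ) dt` with `x = z R`. Its imaginary part changes sign under
`t ↦ t + π`, and the odd powers of `sin t` in the expansion of `sin⁶ (t + φ)` change sign under
`t ↦ -t`. Replacing `cos² t` by `1 - sin² t`, what remains is a combination of the Poisson
integrals `∫ cos (x cos t) sin²ⁿ t dt` with `n ≤ 3`.

Expanding the cosine and integrating termwise (`poisson_integral`, resting on the beta-type moments
`moment`) gives `∫ cos (x cos t) sin²ⁿ t dt = 2π (2n)! / (4ⁿ n!) · Sₙ(x)`, where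
`Sₙ(x) = (x/2)⁻ⁿ Jₙ(x)` is `besselS n x`. The three-term recurrence `besselS_rec` expresses
`S₄, S₅, S₆` through `S₀, …, S₃`, after which the claimed identity is linear in `S₀, …, S₃`.
-/

open MeasureTheory Finset

/-- The entire function `(x/2)⁻ⁿ Jₙ(x) = ∑ (-1)ᵏ (x/2)²ᵏ / (k! (k+n)!)`. -/
noncomputable def besselS (n : ℕ) (x : ℝ) : ℝ :=
  ∑' k : ℕ, (-1 : ℝ) ^ k / (k.factorial * (k + n).factorial) * (x / 2) ^ (2 * k)

lemma besselJ_eq (n : ℕ) (x : ℝ) :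
    besselJ n x = (x / 2) ^ n * besselS n x := by
  unfold besselJ besselS
  rw [← tsum_mul_left]
  congr 1
  ext k
  have h1 : Real.Gamma ((k : ℝ) + n + 1) = ((k + n).factorial : ℝ) := by
    have := Real.Gamma_nat_eq_factorial (k + n)
    rw [← this]; push_cast; rfl
  have h2 : (x / 2) ^ (2 * (k : ℝ) + n) = (x / 2) ^ (2 * k + n) := by
    rw [← Real.rpow_natCast]; push_cast; rfl
  rw [h1, h2, pow_add]
  ring

lemma besselS_summable (n : ℕ) (x : ℝ) :
    Summable fun k : ℕ => (-1 : ℝ) ^ k / (k.factorial * (k + n).factorial) * (x / 2) ^ (2 * k) := by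
  refine Summable.of_norm_bounded (Real.summable_pow_div_factorial ((x / 2) ^ 2)) fun k => ?_
  rw [norm_mul, norm_div, norm_pow, norm_neg, norm_one, one_pow, pow_mul, Real.norm_eq_abs,
    Real.norm_eq_abs, abs_of_nonneg (by positivity), abs_of_nonneg (by positivity),
    div_mul_eq_mul_div, one_mul]
  refine div_le_div_of_nonneg_left (by positivity) (by positivity) ?_
  have : (1 : ℝ) ≤ (k + n).factorial := by exact_mod_cast Nat.factorial_pos _
  nlinarith [(by positivity : (0 : ℝ) < k.factorial)]

/-- The recurrence `Jₙ + Jₙ₊₂ = (2(n+1)/x) Jₙ₊₁`, rewritten for `besselS`. -/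
lemma besselS_rec (n : ℕ) (x : ℝ) :
    (x / 2) ^ 2 * besselS (n + 2) x = (n + 1) * besselS (n + 1) x - besselS n x := by
  have h0 := besselS_summable n x
  have h1 := besselS_summable (n + 1) x
  have hs := (h1.mul_left ((n : ℝ) + 1)).sub h0
  have e : ((n : ℝ) + 1) * besselS (n + 1) x - besselS n x = ∑' k : ℕ,
      (((n : ℝ) + 1) * ((-1 : ℝ) ^ k / (k.factorial * (k + (n + 1)).factorial) * (x / 2) ^ (2 * k))
        - (-1 : ℝ) ^ k / (k.factorial * (k + n).factorial) * (x / 2) ^ (2 * k)) := by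
    rw [(h1.mul_left ((n : ℝ) + 1)).tsum_sub h0, tsum_mul_left]
    rfl
  -- The `k`-th term of the difference carries a factor `k`, so the sum starts at `k = 1`.
  rw [e, hs.tsum_eq_zero_add, besselS, ← tsum_mul_left]
  have hz : (((n : ℝ) + 1) * ((-1 : ℝ) ^ 0 / ((Nat.factorial 0) * (0 + (n + 1)).factorial)
      * (x / 2) ^ (2 * 0))
        - (-1 : ℝ) ^ 0 / ((Nat.factorial 0) * (0 + n).factorial) * (x / 2) ^ (2 * 0)) = 0 := by
    simp only [zero_add, Nat.factorial_succ, Nat.factorial_zero]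
    have := n.factorial_pos
    push_cast
    field_simp
    ring
  rw [hz, zero_add]
  congr 1
  ext k
  have a1 : k + 1 + (n + 1) = (k + n + 1) + 1 := by ring
  have a2 : k + 1 + n = (k + n) + 1 := by ring
  have a3 : k + (n + 2) = (k + n + 1) + 1 := by ring
  rw [a1, a2, a3]
  simp only [Nat.factorial_succ]
  have := (k + n).factorial_pos
  have := k.factorial_pos
  push_cast
  field_simp
  ring

/-- Wallis's integral over a full period. -/
lemma sin_moment (n : ℕ) : ∫ t in (0 : ℝ)..(2 * Real.pi), Real.sin t ^ (2 * n)
    = 2 * Real.pi * (2 * n).factorial / (4 ^ n * n.factorial * n.factorial) := by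
  induction n with
  | zero => simp
  | succ n ih =>
    rw [show 2 * (n + 1) = 2 * n + 2 by ring, integral_sin_pow, ih]
    simp only [Real.sin_zero, Real.sin_two_pi, Nat.factorial_succ]
    have := n.factorial_pos
    push_cast
    field_simp
    ring

lemma moment (k n : ℕ) :
    ∫ t in (0 : ℝ)..(2 * Real.pi), Real.cos t ^ (2 * k) * Real.sin t ^ (2 * n)
    = 2 * Real.pi * (2 * k).factorial * (2 * n).factorial /
      (4 ^ (k + n) * k.factorial * n.factorial * (k + n).factorial) := by
  induction k generalizing n with
  | zero => simp [sin_moment]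
  | succ k ih =>
    have e : ∀ t : ℝ, Real.cos t ^ (2 * (k + 1)) * Real.sin t ^ (2 * n)
        = Real.cos t ^ (2 * k) * Real.sin t ^ (2 * n)
          - Real.cos t ^ (2 * k) * Real.sin t ^ (2 * (n + 1)) := by
      intro t
      have := Real.sin_sq_add_cos_sq t
      rw [mul_add, mul_add, pow_add, pow_add, mul_one,
        show Real.cos t ^ 2 = 1 - Real.sin t ^ 2 by linarith]
      ring
    simp_rw [e]
    rw [intervalIntegral.integral_sub (Continuous.intervalIntegrable (by fun_prop) _ _)
      (Continuous.intervalIntegrable (by fun_prop) _ _), ih, ih]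
    rw [show k + (n + 1) = (k + n) + 1 by ring, show k + 1 + n = (k + n) + 1 by ring,
      show 2 * (n + 1) = 2 * n + 1 + 1 by ring, show 2 * (k + 1) = 2 * k + 1 + 1 by ring]
    simp only [Nat.factorial_succ]
    have := n.factorial_pos
    have := k.factorial_pos
    have := (k + n).factorial_pos
    push_cast
    field_simp
    ring

/-- Poisson's integral representation of `Jₙ`, obtained by termwise integration. -/
lemma poisson_integral (n : ℕ) (x : ℝ) :
    ∫ t in (0 : ℝ)..(2 * Real.pi), Real.cos (x * Real.cos t) * Real.sin t ^ (2 * n)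
    = 2 * Real.pi * ((2 * n).factorial / (4 ^ n * n.factorial)) * besselS n x := by
  have hsum : HasSum (fun k : ℕ => ∫ t in (0 : ℝ)..(2 * Real.pi),
      ((-1) ^ k * (x * Real.cos t) ^ (2 * k) / (2 * k).factorial) * Real.sin t ^ (2 * n))
      (∫ t in (0 : ℝ)..(2 * Real.pi), Real.cos (x * Real.cos t) * Real.sin t ^ (2 * n)) := by
    refine intervalIntegral.hasSum_integral_of_dominated_convergence
      (fun k _ => |x| ^ (2 * k) / (2 * k).factorial) ?_ ?_ ?_ ?_ ?_
    · intro k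
      exact Continuous.aestronglyMeasurable (by fun_prop)
    · intro k
      refine Filter.Eventually.of_forall fun t _ => ?_
      rw [norm_mul, norm_div, norm_mul, norm_pow, norm_pow, norm_pow, norm_neg, norm_one, one_pow,
        one_mul, norm_mul, Real.norm_natCast, mul_pow]
      simp only [Real.norm_eq_abs]
      have h1 : |Real.cos t| ^ (2 * k) ≤ 1 := pow_le_one₀ (abs_nonneg _) (Real.abs_cos_le_one t)
      have h2 : |Real.sin t| ^ (2 * n) ≤ 1 := pow_le_one₀ (abs_nonneg _) (Real.abs_sin_le_one t)
      calc |x| ^ (2 * k) * |Real.cos t| ^ (2 * k) / (2 * k).factorial * |Real.sin t| ^ (2 * n)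
          ≤ |x| ^ (2 * k) * 1 / (2 * k).factorial * 1 := by gcongr
        _ = _ := by ring
    · refine Filter.Eventually.of_forall fun t _ => ?_
      exact (Real.summable_pow_div_factorial |x|).comp_injective
        (i := fun k : ℕ => 2 * k) (fun a b h => by simpa using h)
    · exact intervalIntegrable_const
    · refine Filter.Eventually.of_forall fun t _ => ?_
      exact (Real.hasSum_cos (x * Real.cos t)).mul_right _
  rw [← hsum.tsum_eq, besselS, ← tsum_mul_left]
  congr 1
  ext k
  have e : ∀ t : ℝ, ((-1) ^ k * (x * Real.cos t) ^ (2 * k) / (2 * k).factorial)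
      * Real.sin t ^ (2 * n) = ((-1) ^ k * x ^ (2 * k) / (2 * k).factorial) *
        (Real.cos t ^ (2 * k) * Real.sin t ^ (2 * n)) := by
    intro t; rw [mul_pow]; ring
  simp_rw [e]
  rw [intervalIntegral.integral_const_mul, moment, div_pow, pow_mul 2 2 k, pow_add]
  have := n.factorial_pos
  have := k.factorial_pos
  have := (2 * k).factorial_pos
  have := (k + n).factorial_pos
  norm_num
  field_simp

lemma integral_shift {E : Type*} [NormedAddCommGroup E] [NormedSpace ℝ E] (f : ℝ → E)
    (hf : Function.Periodic f (2 * Real.pi)) (a : ℝ) :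
    ∫ t in (0 : ℝ)..(2 * Real.pi), f (t + a) = ∫ t in (0 : ℝ)..(2 * Real.pi), f t := by
  rw [intervalIntegral.integral_comp_add_right]
  have := hf.intervalIntegral_add_eq a 0
  rw [zero_add] at this
  rw [← this, zero_add, add_comm]

lemma integral_odd (f : ℝ → ℝ) (hf : Function.Periodic f (2 * Real.pi))
    (ho : ∀ t, f (-t) = - f t) : ∫ t in (0 : ℝ)..(2 * Real.pi), f t = 0 := by
  have h := intervalIntegral.integral_comp_sub_left (a := 0) (b := 2 * Real.pi) f (2 * Real.pi)
  have e : ∀ t, f (2 * Real.pi - t) = - f t := by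
    intro t
    rw [← ho, ← hf (-t)]; congr 1; ring
  simp_rw [e] at h
  rw [intervalIntegral.integral_neg, sub_self, sub_zero] at h
  linarith

lemma imag_part (x φ : ℝ) : ∫ t in (0 : ℝ)..(2 * Real.pi),
    Real.sin (x * Real.cos t) * Real.sin (t + φ) ^ 6 = 0 := by
  have h := integral_shift (fun t => Real.sin (x * Real.cos t) * Real.sin (t + φ) ^ 6)
    (fun t => by
      simp only [Real.cos_add_two_pi]
      rw [show t + 2 * Real.pi + φ = t + φ + 2 * Real.pi by ring, Real.sin_add_two_pi]) Real.pi
  have e : ∀ t, Real.sin (x * Real.cos (t + Real.pi)) * Real.sin (t + Real.pi + φ) ^ 6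
      = - (Real.sin (x * Real.cos t) * Real.sin (t + φ) ^ 6) := by
    intro t
    rw [show t + Real.pi + φ = t + φ + Real.pi by ring, Real.sin_add_pi, Real.cos_add_pi, mul_neg,
      Real.sin_neg]
    ring
  simp_rw [e] at h
  rw [intervalIntegral.integral_neg] at h
  linarith

lemma real_part (x φ : ℝ) : ∫ t in (0 : ℝ)..(2 * Real.pi),
    Real.cos (x * Real.cos t) * Real.sin (t + φ) ^ 6 =
    2 * Real.pi * (15 / 8 * besselS 3 x - 45 / 16 * Real.sin φ ^ 2 * x ^ 2 * besselS 4 x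
      + 15 / 32 * Real.sin φ ^ 4 * x ^ 4 * besselS 5 x
      - 1 / 64 * Real.sin φ ^ 6 * x ^ 6 * besselS 6 x) := by
  set s := Real.sin φ with hs
  set c := Real.cos φ with hc
  have hsc : c ^ 2 = 1 - s ^ 2 := by
    have := Real.sin_sq_add_cos_sq φ
    linarith
  -- `A n` is the coefficient of `sin²ⁿ t` in the part of `sin⁶ (t + φ)` that is even in `t`.
  obtain ⟨A, hA⟩ : ∃ A : ℕ → ℝ, A 0 = s ^ 6 ∧ A 1 = 15 * c ^ 2 * s ^ 4 - 3 * s ^ 6 ∧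
      A 2 = 15 * c ^ 4 * s ^ 2 - 30 * c ^ 2 * s ^ 4 + 3 * s ^ 6 ∧
      A 3 = c ^ 6 - 15 * c ^ 4 * s ^ 2 + 15 * c ^ 2 * s ^ 4 - s ^ 6 :=
    ⟨fun n => match n with
      | 0 => s ^ 6
      | 1 => 15 * c ^ 2 * s ^ 4 - 3 * s ^ 6
      | 2 => 15 * c ^ 4 * s ^ 2 - 30 * c ^ 2 * s ^ 4 + 3 * s ^ 6
      | _ => c ^ 6 - 15 * c ^ 4 * s ^ 2 + 15 * c ^ 2 * s ^ 4 - s ^ 6, rfl, rfl, rfl, rfl⟩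
  obtain ⟨hA0, hA1, hA2, hA3⟩ := hA
  have e : ∀ t, Real.cos (x * Real.cos t) * Real.sin (t + φ) ^ 6 =
      (∑ n ∈ range 4, A n * (Real.cos (x * Real.cos t) * Real.sin t ^ (2 * n))) +
      Real.cos (x * Real.cos t) * (6 * c ^ 5 * s * Real.sin t ^ 5 * Real.cos t
        + 20 * c ^ 3 * s ^ 3 * Real.sin t ^ 3 * Real.cos t ^ 3
        + 6 * c * s ^ 5 * Real.sin t * Real.cos t ^ 5) := by
    intro t
    have h : Real.cos t ^ 2 = 1 - Real.sin t ^ 2 := by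
      have := Real.sin_sq_add_cos_sq t
      linarith
    have h4 : Real.cos t ^ 4 = (1 - Real.sin t ^ 2) ^ 2 := by rw [← h]; ring
    have h6 : Real.cos t ^ 6 = (1 - Real.sin t ^ 2) ^ 3 := by rw [← h]; ring
    rw [Real.sin_add, ← hs, ← hc]
    simp only [sum_range_succ, sum_range_zero, hA0, hA1, hA2, hA3]
    linear_combination Real.cos (x * Real.cos t) * (15 * Real.sin t ^ 4 * c ^ 4 * s ^ 2 * h
      + 15 * Real.sin t ^ 2 * c ^ 2 * s ^ 4 * h4 + s ^ 6 * h6)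
  simp_rw [e]
  rw [intervalIntegral.integral_add (Continuous.intervalIntegrable (by fun_prop) _ _)
      (Continuous.intervalIntegrable (by fun_prop) _ _),
    intervalIntegral.integral_finsetSum
      (fun n _ => Continuous.intervalIntegrable (by fun_prop) _ _),
    integral_odd (fun t => Real.cos (x * Real.cos t) * (6 * c ^ 5 * s * Real.sin t ^ 5 * Real.cos t
        + 20 * c ^ 3 * s ^ 3 * Real.sin t ^ 3 * Real.cos t ^ 3
        + 6 * c * s ^ 5 * Real.sin t * Real.cos t ^ 5))
      (fun t => by simp only [Real.cos_add_two_pi, Real.sin_add_two_pi])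
      (fun t => by simp only [Real.cos_neg, Real.sin_neg]; ring)]
  simp_rw [intervalIntegral.integral_const_mul, poisson_integral]
  simp only [sum_range_succ, sum_range_zero, hA0, hA1, hA2, hA3]
  have c4 : c ^ 4 = (1 - s ^ 2) ^ 2 := by rw [← hsc]; ring
  have c6 : c ^ 6 = (1 - s ^ 2) ^ 3 := by rw [← hsc]; ring
  rw [hsc, c4, c6]
  have r1 := besselS_rec 1 x
  have r2 := besselS_rec 2 x
  have r3 := besselS_rec 3 x
  have r4 := besselS_rec 4 x
  have r0 := besselS_rec 0 x
  norm_num [Nat.factorial] at r0 r1 r2 r3 r4 ⊢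
  -- With `y = x² / 4`: reduce `y S₄`, `y² S₅` and `y³ S₆` to combinations of `S₀, …, S₃`.
  have t4 : x ^ 2 * besselS 4 x = 4 * (3 * besselS 3 x - besselS 2 x) := by
    linear_combination 4 * r2
  have t5 : x ^ 4 * besselS 5 x = 16 * (4 * (3 * besselS 3 x - besselS 2 x)
      - (2 * besselS 2 x - besselS 1 x)) := by
    linear_combination 4 * x ^ 2 * r3 + 16 * t4 - 16 * r1
  have t6 : x ^ 6 * besselS 6 x = 64 * (5 * (4 * (3 * besselS 3 x - besselS 2 x)
      - (2 * besselS 2 x - besselS 1 x)) - (3 * (2 * besselS 2 x - besselS 1 x)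
      - (besselS 1 x - besselS 0 x))) := by
    linear_combination 4 * x ^ 4 * r4 + 20 * t5 - 4 * x ^ 2 * t4 - 192 * r1 + 64 * r0
  linear_combination 2 * Real.pi * (45 / 16 * s ^ 2 * t4 - 15 / 32 * s ^ 4 * t5
    + 1 / 64 * s ^ 6 * t6)

theorem stmt9 (z α β : ℝ) (hz : 0 < z) (hαβ : ¬(α = 0 ∧ β = 0))
    (R : ℝ) (hR : R = Real.sqrt (α ^ 2 + β ^ 2)) :
    (∫ θ in (0 : ℝ)..(2 * Real.pi),
      Complex.exp (Complex.I * ((z * (α * Real.cos θ + β * Real.sin θ) : ℝ) : ℂ)) *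
        ((Real.sin θ ^ 6 : ℝ) : ℂ))
    = ((2 * Real.pi *
        (15 * besselJ 3 (z * R) / (z * R) ^ 3 - 45 * β ^ 2 * besselJ 4 (z * R) / (z ^ 2 * R ^ 4) +
          15 * β ^ 4 * besselJ 5 (z * R) / (z * R ^ 5) -
          β ^ 6 * besselJ 6 (z * R) / R ^ 6) : ℝ) : ℂ) := by
  have hpos : 0 < α ^ 2 + β ^ 2 := by
    by_contra h
    exact hαβ ⟨by nlinarith [sq_nonneg α, sq_nonneg β], by nlinarith [sq_nonneg α, sq_nonneg β]⟩
  have hRpos : 0 < R := hR ▸ Real.sqrt_pos.2 hpos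
  obtain ⟨φ, hα, hβ⟩ : ∃ φ : ℝ, α = R * Real.cos φ ∧ β = R * Real.sin φ := by
    have hn : ‖(⟨α, β⟩ : ℂ)‖ = R := by
      rw [Complex.norm_def, Complex.normSq_mk, hR]; congr 1; ring
    refine ⟨Complex.arg ⟨α, β⟩, ?_, ?_⟩
    · rw [← hn, Complex.norm_mul_cos_arg]
    · rw [← hn, Complex.norm_mul_sin_arg]
  rw [← integral_shift _ (fun t => by
    simp only [Real.cos_add_two_pi, Real.sin_add_two_pi]) φ]
  have e : ∀ t : ℝ, Complex.exp (Complex.I *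
        ((z * (α * Real.cos (t + φ) + β * Real.sin (t + φ)) : ℝ) : ℂ)) *
        ((Real.sin (t + φ) ^ 6 : ℝ) : ℂ)
      = ((Real.cos (z * R * Real.cos t) * Real.sin (t + φ) ^ 6 : ℝ) : ℂ)
        + ((Real.sin (z * R * Real.cos t) * Real.sin (t + φ) ^ 6 : ℝ) : ℂ) * Complex.I := by
    intro t
    have h : z * (α * Real.cos (t + φ) + β * Real.sin (t + φ)) = z * R * Real.cos t := by
      have h1 : Real.cos t = Real.cos (t + φ - φ) := by ring_nf
      rw [h1, Real.cos_sub, hα, hβ]; ring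
    rw [h, mul_comm Complex.I, Complex.exp_mul_I, ← Complex.ofReal_cos, ← Complex.ofReal_sin]
    push_cast
    ring
  simp_rw [e]
  rw [intervalIntegral.integral_add (Continuous.intervalIntegrable (by fun_prop) _ _)
      (Continuous.intervalIntegrable (by fun_prop) _ _), intervalIntegral.integral_mul_const,
    intervalIntegral.integral_ofReal, intervalIntegral.integral_ofReal, imag_part, real_part]
  rw [Complex.ofReal_zero, zero_mul, add_zero]
  congr 2
  have b3 := besselJ_eq 3 (z * R)
  have b4 := besselJ_eq 4 (z * R)
  have b5 := besselJ_eq 5 (z * R)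
  have b6 := besselJ_eq 6 (z * R)
  push_cast at b3 b4 b5 b6
  rw [b3, b4, b5, b6, hβ]
  field_simp
  ring
end
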